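/- Let (α, β) be an admissible pair, and for 0 < λ < λ*(α,β) let u_λ be the minimal classical solution of (P)_{λ,α,β}. Then: (i) for every 0 < λ < λ*(α,β), 2 ∫_B (u_λ − Φ)²/(1−u_λ)³ ≤ ∫_B (u_λ − Φ)/(1−u_λ)²; (ii) there exists a constant C > 0, independent of λ, such that ∫_B (Δu_λ)² + ∫_B (1−u_λ)^{−3} ≤ C for every λ ∈ (0, λ*(α,β)). -/

import Mathlib

open MeasureTheory Metric Set Filter

/-- The Laplacian of `u : ℝ^N → ℝ`, as the sum of pure second partial derivatives. -/
noncomputable def lap {N : ℕ} (u : EuclideanSpace ℝ (Fin N) → ℝ) (x : EuclideanSpace ℝ (Fin N)) : ℝ :=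
  ∑ i : Fin N, fderiv ℝ (fun y => fderiv ℝ u y (EuclideanSpace.single i 1)) x
    (EuclideanSpace.single i 1)

/-- The biharmonic operator `Δ²`. -/
noncomputable def biharm {N : ℕ} (u : EuclideanSpace ℝ (Fin N) → ℝ)
    (x : EuclideanSpace ℝ (Fin N)) : ℝ :=
  lap (lap u) x

/-- `Φ(x) = (α - β/2) + (β/2)|x|²`, the biharmonic extension of the boundary data `(α, β)`. -/
noncomputable def Phi {N : ℕ} (α β : ℝ) (x : EuclideanSpace ℝ (Fin N)) : ℝ :=
  (α - β / 2) + (β / 2) * ‖x‖ ^ 2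

/-- A pair `(α, β)` is admissible if `β ≤ 0` and `α - β/2 < 1`. -/
def Admissible (α β : ℝ) : Prop := β ≤ 0 ∧ α - β / 2 < 1

/-- Test functions: `φ ∈ C⁴(B̄)` with `φ = 0` and `∇φ = 0` on `∂B`. -/
def IsTest (N : ℕ) (φ : EuclideanSpace ℝ (Fin N) → ℝ) : Prop :=
  ContDiffOn ℝ 4 φ (closedBall (0 : EuclideanSpace ℝ (Fin N)) 1) ∧
    (∀ x : EuclideanSpace ℝ (Fin N), ‖x‖ = 1 → φ x = 0) ∧
    (∀ x : EuclideanSpace ℝ (Fin N), ‖x‖ = 1 →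
      fderivWithin ℝ φ (closedBall (0 : EuclideanSpace ℝ (Fin N)) 1) x = 0)

/-- A weak solution of `(P)_{λ,α,β}` on the unit ball. -/
def IsWeakSolutionAB (N : ℕ) (lam α β : ℝ) (u : EuclideanSpace ℝ (Fin N) → ℝ) : Prop :=
  (∀ᵐ x ∂(volume.restrict (ball (0 : EuclideanSpace ℝ (Fin N)) 1)), α ≤ u x ∧ u x ≤ 1) ∧
    IntegrableOn (fun x => ((1 - u x) ^ 2)⁻¹) (ball (0 : EuclideanSpace ℝ (Fin N)) 1) ∧
    ∀ φ : EuclideanSpace ℝ (Fin N) → ℝ, IsTest N φ →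
      ∫ x in ball (0 : EuclideanSpace ℝ (Fin N)) 1, (u x - Phi α β x) * biharm φ x =
        lam * ∫ x in ball (0 : EuclideanSpace ℝ (Fin N)) 1, φ x / (1 - u x) ^ 2

/-- A weak super-solution of `(P)_{λ,α,β}` on the unit ball. -/
def IsWeakSuperSolutionAB (N : ℕ) (lam α β : ℝ) (u : EuclideanSpace ℝ (Fin N) → ℝ) : Prop :=
  (∀ᵐ x ∂(volume.restrict (ball (0 : EuclideanSpace ℝ (Fin N)) 1)), α ≤ u x ∧ u x ≤ 1) ∧
    IntegrableOn (fun x => ((1 - u x) ^ 2)⁻¹) (ball (0 : EuclideanSpace ℝ (Fin N)) 1) ∧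
    ∀ φ : EuclideanSpace ℝ (Fin N) → ℝ, IsTest N φ →
      (∀ x ∈ closedBall (0 : EuclideanSpace ℝ (Fin N)) 1, 0 ≤ φ x) →
      ∫ x in ball (0 : EuclideanSpace ℝ (Fin N)) 1, (u x - Phi α β x) * biharm φ x ≥
        lam * ∫ x in ball (0 : EuclideanSpace ℝ (Fin N)) 1, φ x / (1 - u x) ^ 2

/-- A classical solution of `(P)_{λ,α,β}` on the unit ball: `u ∈ C⁴(B̄)`, `α < u < 1` in `B`,
`Δ²u = λ(1-u)⁻²` in `B`, and `u = α`, `∂_ν u = β` on `∂B`. -/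
structure IsClassicalSolutionAB (N : ℕ) (lam α β : ℝ)
    (u : EuclideanSpace ℝ (Fin N) → ℝ) : Prop where
  contDiffOn : ContDiffOn ℝ 4 u (closedBall (0 : EuclideanSpace ℝ (Fin N)) 1)
  gt_alpha : ∀ x ∈ ball (0 : EuclideanSpace ℝ (Fin N)) 1, α < u x
  lt_one : ∀ x ∈ ball (0 : EuclideanSpace ℝ (Fin N)) 1, u x < 1
  eqn : ∀ x ∈ ball (0 : EuclideanSpace ℝ (Fin N)) 1, biharm u x = lam / (1 - u x) ^ 2
  bdry : ∀ x : EuclideanSpace ℝ (Fin N), ‖x‖ = 1 → u x = α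
  bdry_deriv : ∀ x : EuclideanSpace ℝ (Fin N), ‖x‖ = 1 →
    fderivWithin ℝ u (closedBall (0 : EuclideanSpace ℝ (Fin N)) 1) x x = β

/-- The set of voltages `λ > 0` for which `(P)_{λ,α,β}` admits a classical solution;
the pull-in voltage `λ*(α,β)` is its supremum. -/
def solSetAB (N : ℕ) (α β : ℝ) : Set ℝ :=
  {lam | 0 < lam ∧ ∃ u, IsClassicalSolutionAB N lam α β u}

/-! A minimal solution is invariant under linear isometries, hence radial, and a radial function
solves the problem exactly when its profile satisfies `u = Φ + G (λ (1 - u)⁻²)`, where `G` is the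
radial Green operator of the clamped plate. Two Laplace inversions make `G` explicit, and it is
positive and symmetric. By positivity, a monotone fixed point argument yields a solution for `λ`
below any profile `v` for a larger voltage `μ`, so the minimal profile `u` satisfies `u ≤ v`.
By convexity of `s ↦ s⁻²`, the difference `v - u` is a positive super-solution of the linearisation
`Δ² - 2λ (1 - u)⁻³` at `u`, so the iterates of `K f = 2λ (1 - u)⁻³ G f` on `f = λ (1 - u)⁻²` stay
bounded. As `K` is symmetric for the energy form `⟨f, g⟩ = ∫ f G g`, the sequence `⟨Kʲ f, Kʲ f⟩` is
log-convex, and being bounded it cannot increase; hence `⟨f, K f⟩ ≤ ⟨f, f⟩`, which is (i) because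
`G f = u - Φ`.

As `(u - Φ) / (1 - u) = (1 - Φ) / (1 - u) - 1`, the two integrands of (i) are polynomials in
`(1 - u)⁻¹` of degrees three and two, and the cubic coefficient `(1 - Φ)²` is bounded below; this
bounds `∫ (1 - u)⁻³`. Testing the equation with `u - Φ` turns it into a bound on `∫ (Δu)²`. -/

open scoped Topology ContDiff

section DilationMean

universe u

variable {X Y : Type u} [NormedAddCommGroup X] [NormedSpace ℝ X] [NormedAddCommGroup Y]
  [NormedSpace ℝ Y]

/-- The weighted mean `∫₀¹ tᵐ H(t x) dt` of `H` over the dilates of `x`. On radial functions it is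
the flux operator of the Laplacian in dimension `m + 1`: if `Δ w = H` with `w` and `H` radial, then
`∇w(x) = dilationMean m H x • x`. -/
noncomputable def dilationMean (m : ℕ) (H : X → Y) (x : X) : Y :=
  ∫ t in (0 : ℝ)..1, t ^ m • H (t • x)

lemma continuous_dilationMean (m : ℕ) {H : X → Y} (hH : Continuous H) :
    Continuous (dilationMean m H) :=
  intervalIntegral.continuous_parametric_intervalIntegral_of_continuous'
    (by simp only [Function.uncurry_def]; fun_prop) 0 1

lemma dilationMean_comp_norm (m : ℕ) (h : ℝ → ℝ) {E : Type} [NormedAddCommGroup E]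
    [NormedSpace ℝ E] (x : E) :
    dilationMean m (fun y => h ‖y‖) x = dilationMean m h ‖x‖ := by
  refine intervalIntegral.integral_congr fun t ht => ?_
  rw [uIcc_of_le zero_le_one] at ht
  simp only [norm_smul, Real.norm_of_nonneg ht.1, smul_eq_mul]

lemma dilationMean_clm_apply (m : ℕ) {H : X → X →L[ℝ] Y} (hH : Continuous H)
    (x v : X) : dilationMean m H x v = dilationMean m (fun y => H y v) x :=
  ContinuousLinearMap.intervalIntegral_apply (Continuous.intervalIntegrable (by fun_prop) _ _) v

variable [FiniteDimensional ℝ X]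

lemma hasFDerivAt_dilationMean (m : ℕ) {H : X → Y} (hH : ContDiff ℝ 1 H) (x : X) :
    HasFDerivAt (dilationMean m H) (dilationMean (m + 1) (fderiv ℝ H) x) x := by
  have hc := hH.continuous
  have hc' : Continuous (fderiv ℝ H) := hH.continuous_fderiv one_ne_zero
  obtain ⟨C, hC⟩ := (isCompact_closedBall (0 : X) (‖x‖ + 1)).exists_bound_of_continuousOn
    hc'.continuousOn
  refine intervalIntegral.hasFDerivAt_integral_of_dominated_of_fderiv_le
    (F' := fun y t => t ^ (m + 1) • fderiv ℝ H (t • y)) (bound := fun _ => C)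
    (ball_mem_nhds x one_pos)
    (.of_forall fun y =>
      (by fun_prop : Continuous fun t : ℝ => t ^ m • H (t • y)).aestronglyMeasurable)
    (Continuous.intervalIntegrable (by fun_prop) _ _)
    (by fun_prop : Continuous fun t : ℝ => t ^ (m + 1) • fderiv ℝ H (t • x)).aestronglyMeasurable
    (.of_forall fun t ht y hy => ?_) intervalIntegrable_const (.of_forall fun t _ y _ => ?_)
  · rw [uIoc_of_le zero_le_one] at ht
    have hty : t • y ∈ closedBall (0 : X) (‖x‖ + 1) := by
      have := norm_le_norm_add_norm_sub' y x
      rw [mem_ball_iff_norm] at hy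
      rw [mem_closedBall_zero_iff, norm_smul, Real.norm_of_nonneg ht.1.le]
      nlinarith [norm_nonneg y, ht.1, ht.2]
    rw [norm_smul, Real.norm_of_nonneg (by have := ht.1; positivity)]
    exact (mul_le_of_le_one_left (norm_nonneg _) (pow_le_one₀ ht.1.le ht.2)).trans (hC _ hty)
  · have hdilate : HasFDerivAt (fun z : X => t • z) (t • ContinuousLinearMap.id ℝ X) y :=
      (hasFDerivAt_id y).const_smul t
    refine (((hH.differentiable one_ne_zero _).hasFDerivAt.comp y hdilate).const_smul
      (t ^ m)).congr_fderiv ?_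
    ext v
    simp [pow_succ, mul_smul]

lemma contDiff_dilationMean (n m : ℕ) {H : X → Y} (hH : ContDiff ℝ n H) :
    ContDiff ℝ n (dilationMean m H) := by
  induction n generalizing m Y with
  | zero =>
    rw [Nat.cast_zero, contDiff_zero] at hH ⊢
    exact continuous_dilationMean m hH
  | succ n ih =>
    have hH1 : ContDiff ℝ 1 H := hH.of_le (by norm_cast; omega)
    have hfderiv : fderiv ℝ (dilationMean m H) = dilationMean (m + 1) (fderiv ℝ H) :=
      funext fun x => (hasFDerivAt_dilationMean m hH1 x).fderiv
    push_cast at hH ⊢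
    rw [contDiff_succ_iff_fderiv] at hH ⊢
    exact ⟨fun x => (hasFDerivAt_dilationMean m hH1 x).differentiableAt, by simp,
      hfderiv ▸ ih (m + 1) hH.2.2⟩

lemma add_fderiv_dilationMean_self [CompleteSpace Y] (m : ℕ) {H : X → Y} (hH : ContDiff ℝ 1 H)
    (x : X) :
    ((m : ℝ) + 1) • dilationMean m H x + fderiv ℝ (dilationMean m H) x x = H x := by
  have hc := hH.continuous
  have hc' : Continuous (fderiv ℝ H) := hH.continuous_fderiv one_ne_zero
  have hderiv (t : ℝ) : HasDerivAt (fun t : ℝ => t ^ (m + 1) • H (t • x))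
      (((m : ℝ) + 1) • t ^ m • H (t • x) + t ^ (m + 1) • fderiv ℝ H (t • x) x) t := by
    have hray : HasDerivAt (fun t : ℝ => t • x) x t := by
      simpa using (hasDerivAt_id t).smul_const x
    refine ((hasDerivAt_pow (m + 1) t).fun_smul
      ((hH.differentiable one_ne_zero _).hasFDerivAt.comp_hasDerivAt t hray)).congr_deriv ?_
    simp only [Function.comp_apply, Nat.cast_add, Nat.cast_one, add_tsub_cancel_right, mul_smul]
    exact add_comm _ _
  have hint := intervalIntegral.integral_eq_sub_of_hasDerivAt (fun t _ => hderiv t)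
    (Continuous.intervalIntegrable (by fun_prop) 0 1)
  rw [intervalIntegral.integral_add (Continuous.intervalIntegrable (by fun_prop) _ _)
    (Continuous.intervalIntegrable (by fun_prop) _ _), intervalIntegral.integral_smul] at hint
  rw [(hasFDerivAt_dilationMean m hH x).fderiv,
    dilationMean_clm_apply (m + 1) hc' x x]
  simpa [dilationMean] using hint

end DilationMean

section RadialOperators

variable (m : ℕ)

/-- The operator `dilationMean m` on continuous functions of the radius. -/
noncomputable def radialMean : C(ℝ, ℝ) →ₗ[ℝ] C(ℝ, ℝ) where
  toFun h := ⟨dilationMean m h, continuous_dilationMean m h.continuous⟩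
  map_add' f g := by
    ext r
    simp only [dilationMean, ContinuousMap.coe_mk, ContinuousMap.add_apply, smul_add]
    exact intervalIntegral.integral_add (Continuous.intervalIntegrable (by fun_prop) _ _)
      (Continuous.intervalIntegrable (by fun_prop) _ _)
  map_smul' c f := by
    ext r
    simp [dilationMean, mul_left_comm _ c]

/-- The integral `∫₀¹ tᵐ h(t) dt` of a radial function over the unit ball of `ℝᵐ⁺¹`, up to the area
of the unit sphere. -/
noncomputable def radialIntegral : C(ℝ, ℝ) →ₗ[ℝ] ℝ where
  toFun h := radialMean m h 1
  map_add' := by simp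
  map_smul' := by simp

/-- The solution `w` of `w'' + (m / r) w' = h` with `w(0) = w'(0) = 0`: the radial inverse of the
Laplacian of `ℝᵐ⁺¹`. -/
noncomputable def radialPotential : C(ℝ, ℝ) →ₗ[ℝ] C(ℝ, ℝ) where
  toFun h := ⟨fun r => ∫ s in (0 : ℝ)..r, s * radialMean m h s,
    intervalIntegral.continuous_primitive
      (fun _ _ => Continuous.intervalIntegrable (by fun_prop) _ _) 0⟩
  map_add' f g := by
    ext r
    simp only [map_add, ContinuousMap.coe_mk, ContinuousMap.add_apply, mul_add]
    exact intervalIntegral.integral_add (Continuous.intervalIntegrable (by fun_prop) _ _)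
      (Continuous.intervalIntegrable (by fun_prop) _ _)
  map_smul' c f := by
    ext r
    simp [mul_left_comm _ c]

/-- `Δ w` for the radial solution `w` of `Δ² w = h` in the unit ball with `w = ∂_ν w = 0` on the
boundary: the solution of `Δ v = h` whose integral over the ball vanishes. -/
noncomputable def clampedLaplacian : C(ℝ, ℝ) →ₗ[ℝ] C(ℝ, ℝ) where
  toFun h := radialPotential m h - (((m : ℝ) + 1) * radialIntegral m (radialPotential m h)) • 1
  map_add' f g := by ext r; simp; ring
  map_smul' c f := by ext r; simp; ring

/-- The Green operator of the clamped plate: the radial solution `w` of `Δ² w = h` in the unit ball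
with `w = ∂_ν w = 0` on the boundary. -/
noncomputable def clampedGreen : C(ℝ, ℝ) →ₗ[ℝ] C(ℝ, ℝ) where
  toFun h := radialPotential m (clampedLaplacian m h) -
    radialPotential m (clampedLaplacian m h) 1 • 1
  map_add' f g := by ext r; simp; ring
  map_smul' c f := by ext r; simp; ring

lemma radialMean_apply (h : C(ℝ, ℝ)) (r : ℝ) : radialMean m h r = dilationMean m h r := rfl

lemma radialIntegral_eq_integral (h : C(ℝ, ℝ)) :
    radialIntegral m h = ∫ t in (0 : ℝ)..1, t ^ m * h t := by
  change dilationMean m h 1 = _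
  simp [dilationMean]

lemma clampedLaplacian_apply (h : C(ℝ, ℝ)) (r : ℝ) : clampedLaplacian m h r =
    radialPotential m h r - ((m : ℝ) + 1) * radialIntegral m (radialPotential m h) := by
  simp [clampedLaplacian]

lemma clampedGreen_apply (h : C(ℝ, ℝ)) (r : ℝ) : clampedGreen m h r =
    radialPotential m (clampedLaplacian m h) r - radialPotential m (clampedLaplacian m h) 1 := by
  simp [clampedGreen]

variable {m} {f g h : C(ℝ, ℝ)} {r : ℝ}

lemma hasDerivAt_radialPotential (h : C(ℝ, ℝ)) (r : ℝ) :
    HasDerivAt (radialPotential m h) (r * radialMean m h r) r :=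
  have hc : Continuous fun s => s * radialMean m h s := by fun_prop
  (hc.integral_hasStrictDerivAt 0 r).hasDerivAt

lemma hasDerivAt_pow_mul_radialMean (h : C(ℝ, ℝ)) (r : ℝ) :
    HasDerivAt (fun r => r ^ (m + 1) * radialMean m h r) (r ^ m * h r) r := by
  have hflux (r : ℝ) : r ^ (m + 1) * radialMean m h r = ∫ s in (0 : ℝ)..r, s ^ m * h s := by
    have hsubst := intervalIntegral.mul_integral_comp_mul_right
      (a := 0) (b := 1) (f := fun s => s ^ m * h s) r
    simp only [zero_mul, one_mul] at hsubst
    rw [← hsubst, pow_succ', mul_assoc, radialMean_apply, dilationMean,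
      ← intervalIntegral.integral_const_mul]
    simp only [smul_eq_mul, mul_pow]
    congr 2 with t
    ring
  simp only [hflux]
  have hc : Continuous fun s => s ^ m * h s := by fun_prop
  exact (hc.integral_hasStrictDerivAt 0 r).hasDerivAt

lemma radialPotential_zero (h : C(ℝ, ℝ)) : radialPotential m h 0 = 0 :=
  intervalIntegral.integral_same

lemma radialMean_pow (k : ℕ) (r : ℝ) :
    radialMean m (.id ℝ ^ k) r = ((m : ℝ) + k + 1)⁻¹ * r ^ k := by
  have hpow (t : ℝ) : t ^ m * (t * r) ^ k = t ^ (m + k) * r ^ k := by ring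
  simp [radialMean_apply, dilationMean, hpow]

lemma radialPotential_pow (k : ℕ) (r : ℝ) :
    radialPotential m (.id ℝ ^ k) r = (((m : ℝ) + k + 1) * (k + 2))⁻¹ * r ^ (k + 2) := by
  have hpow (s : ℝ) : s * (((m : ℝ) + k + 1)⁻¹ * s ^ k) = ((m : ℝ) + k + 1)⁻¹ * s ^ (k + 1) := by
    ring
  change ∫ s in (0 : ℝ)..r, s * radialMean m (.id ℝ ^ k) s = _
  simp only [radialMean_pow, hpow, intervalIntegral.integral_const_mul, integral_pow]
  push_cast
  field_simp
  ring

lemma radialIntegral_pow (k : ℕ) : radialIntegral m (.id ℝ ^ k) = ((m : ℝ) + k + 1)⁻¹ :=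
  (radialMean_pow k 1).trans (by simp)

lemma radialIntegral_one : radialIntegral m 1 = ((m : ℝ) + 1)⁻¹ := by
  simpa using radialIntegral_pow (m := m) 0

lemma radialPotential_one (r : ℝ) :
    radialPotential m 1 r = (2 * ((m : ℝ) + 1))⁻¹ * r ^ 2 := by
  simpa [mul_comm] using radialPotential_pow (m := m) 0 r

lemma clampedLaplacian_one (r : ℝ) : clampedLaplacian m 1 r =
    (2 * ((m : ℝ) + 1))⁻¹ * r ^ 2 - (2 * ((m : ℝ) + 3))⁻¹ := by
  have hpot : radialPotential m 1 = (2 * ((m : ℝ) + 1))⁻¹ • (.id ℝ ^ 2 : C(ℝ, ℝ)) := by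
    ext r; simp [radialPotential_one]
  have hint : radialIntegral m (.id ℝ ^ 2) = ((m : ℝ) + 3)⁻¹ := by
    rw [radialIntegral_pow]
    norm_num [add_assoc]
  rw [clampedLaplacian_apply, radialPotential_one, hpot, map_smul, hint, smul_eq_mul]
  field_simp

lemma clampedGreen_one (r : ℝ) : clampedGreen m 1 r =
    (8 * ((m : ℝ) + 1) * (m + 3))⁻¹ * (1 - r ^ 2) ^ 2 := by
  have hlap : clampedLaplacian m 1 = (2 * ((m : ℝ) + 1))⁻¹ • (.id ℝ ^ 2 : C(ℝ, ℝ)) -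
      (2 * ((m : ℝ) + 3))⁻¹ • 1 := by
    ext r; simp [clampedLaplacian_one]
  have hpot (r : ℝ) : radialPotential m (clampedLaplacian m 1) r =
      (2 * ((m : ℝ) + 1))⁻¹ * ((((m : ℝ) + 3) * 4)⁻¹ * r ^ 4) -
        (2 * ((m : ℝ) + 3))⁻¹ * ((2 * ((m : ℝ) + 1))⁻¹ * r ^ 2) := by
    have := radialPotential_pow (m := m) 2 r
    norm_num [add_assoc] at this
    simp [hlap, radialPotential_one, this]
  rw [clampedGreen_apply, hpot, hpot]
  field_simp
  ring

lemma radialIntegral_nonneg (hf : ∀ r ∈ Icc (0 : ℝ) 1, 0 ≤ f r) : 0 ≤ radialIntegral m f := by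
  rw [radialIntegral_eq_integral]
  exact intervalIntegral.integral_nonneg zero_le_one
    fun t ht => mul_nonneg (pow_nonneg ht.1 m) (hf t ht)

lemma radialIntegral_mono (hfg : ∀ r ∈ Icc (0 : ℝ) 1, f r ≤ g r) :
    radialIntegral m f ≤ radialIntegral m g := by
  rw [← sub_nonneg, ← map_sub]
  exact radialIntegral_nonneg fun r hr => sub_nonneg.2 (hfg r hr)

lemma radialIntegral_congr (hfg : ∀ r ∈ Icc (0 : ℝ) 1, f r = g r) :
    radialIntegral m f = radialIntegral m g :=
  (radialIntegral_mono fun r hr => (hfg r hr).le).antisymm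
    (radialIntegral_mono fun r hr => (hfg r hr).ge)

lemma radialMean_monotoneOn (hh : MonotoneOn h (Icc 0 1)) :
    MonotoneOn (radialMean m h) (Icc 0 1) := fun r hr s hs hrs =>
  intervalIntegral.integral_mono_on zero_le_one (Continuous.intervalIntegrable (by fun_prop) _ _)
    (Continuous.intervalIntegrable (by fun_prop) _ _) fun t ht =>
      mul_le_mul_of_nonneg_left
        (hh (unitInterval.mul_mem ht hr) (unitInterval.mul_mem ht hs)
          (mul_le_mul_of_nonneg_left hrs ht.1)) (pow_nonneg ht.1 m)

lemma radialMean_nonneg (hh : ∀ r ∈ Icc (0 : ℝ) 1, 0 ≤ h r) (hr : r ∈ Icc (0 : ℝ) 1) :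
    0 ≤ radialMean m h r :=
  intervalIntegral.integral_nonneg zero_le_one fun _ ht =>
    mul_nonneg (pow_nonneg ht.1 m) (hh _ (unitInterval.mul_mem ht hr))

lemma radialPotential_monotoneOn (hh : ∀ r ∈ Icc (0 : ℝ) 1, 0 ≤ radialMean m h r) :
    MonotoneOn (radialPotential m h) (Icc 0 1) :=
  monotoneOn_of_hasDerivWithinAt_nonneg (convex_Icc 0 1) (map_continuous _).continuousOn
    (fun r _ => (hasDerivAt_radialPotential h r).hasDerivWithinAt) fun r hr =>
      mul_nonneg (interior_subset hr).1 (hh r (interior_subset hr))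

lemma radialIntegral_clampedLaplacian (h : C(ℝ, ℝ)) :
    radialIntegral m (clampedLaplacian m h) = 0 := by
  change radialIntegral m (radialPotential m h - _ • 1) = 0
  rw [map_sub, map_smul, radialIntegral_one, smul_eq_mul]
  field_simp
  ring

lemma clampedGreen_nonneg (hh : ∀ r ∈ Icc (0 : ℝ) 1, 0 ≤ h r) (hr : r ∈ Icc (0 : ℝ) 1) :
    0 ≤ clampedGreen m h r := by
  have hone : (1 : ℝ) ∈ Icc (0 : ℝ) 1 := ⟨zero_le_one, le_rfl⟩
  have hmono : MonotoneOn (clampedLaplacian m h) (Icc 0 1) := fun s hs _ ht hst => by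
    simpa only [clampedLaplacian_apply, sub_le_sub_iff_right] using
      radialPotential_monotoneOn (fun _ => radialMean_nonneg hh) hs ht hst
  -- A monotone function of zero mean over the ball has nonpositive mean over every smaller ball.
  have hflux : ∀ s ∈ Icc (0 : ℝ) 1, radialMean m (clampedLaplacian m h) s ≤ 0 := fun s hs =>
    (radialMean_monotoneOn hmono hs hone hs.2).trans_eq (radialIntegral_clampedLaplacian h)
  have hanti := radialPotential_monotoneOn (m := m) (h := -clampedLaplacian m h)
    (fun s hs => by simpa using hflux s hs) hr hone hr.2
  rw [clampedGreen_apply]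
  simp only [map_neg, ContinuousMap.neg_apply] at hanti
  linarith

lemma clampedGreen_mono (hfg : ∀ r ∈ Icc (0 : ℝ) 1, f r ≤ g r) (hr : r ∈ Icc (0 : ℝ) 1) :
    clampedGreen m f r ≤ clampedGreen m g r := by
  rw [← sub_nonneg, ← ContinuousMap.sub_apply, ← map_sub]
  exact clampedGreen_nonneg (fun s hs => sub_nonneg.2 (hfg s hs)) hr

lemma clampedGreen_congr (hfg : ∀ r ∈ Icc (0 : ℝ) 1, f r = g r) (hr : r ∈ Icc (0 : ℝ) 1) :
    clampedGreen m f r = clampedGreen m g r :=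
  (clampedGreen_mono (fun s hs => (hfg s hs).le) hr).antisymm
    (clampedGreen_mono (fun s hs => (hfg s hs).ge) hr)

lemma abs_radialIntegral_le {M : ℝ} (hM : ∀ r ∈ Icc (0 : ℝ) 1, |h r| ≤ M) :
    |radialIntegral m h| ≤ M * ((m : ℝ) + 1)⁻¹ := by
  have hconst : radialIntegral m (M • 1) = M * ((m : ℝ) + 1)⁻¹ := by
    rw [map_smul, radialIntegral_one, smul_eq_mul]
  rw [← hconst, abs_le, ← map_neg]
  exact ⟨radialIntegral_mono fun r hr => by simpa using (abs_le.1 (hM r hr)).1,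
    radialIntegral_mono fun r hr => by simpa using (abs_le.1 (hM r hr)).2⟩

lemma abs_radialMean_le {M : ℝ} (hM : ∀ r ∈ Icc (0 : ℝ) 1, |h r| ≤ M) (hr : r ∈ Icc (0 : ℝ) 1) :
    |radialMean m h r| ≤ M := by
  suffices h01 : ‖radialMean m h r‖ ≤ M * |1 - 0| by simpa using h01
  refine intervalIntegral.norm_integral_le_of_norm_le_const fun t ht => ?_
  rw [uIoc_of_le zero_le_one] at ht
  have hpow : |t ^ m| ≤ 1 := by
    rw [abs_of_nonneg (pow_nonneg ht.1.le m)]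
    exact pow_le_one₀ ht.1.le ht.2
  rw [norm_smul]
  exact (mul_le_of_le_one_left (norm_nonneg _) hpow).trans
    (hM _ (unitInterval.mul_mem ⟨ht.1.le, ht.2⟩ hr))

lemma radialPotential_lipschitzOnWith {M : NNReal} (hM : ∀ r ∈ Icc (0 : ℝ) 1, |h r| ≤ M) :
    LipschitzOnWith M (radialPotential m h) (Icc 0 1) := by
  refine (convex_Icc 0 1).lipschitzOnWith_of_nnnorm_hasDerivWithin_le
    (fun r _ => (hasDerivAt_radialPotential h r).hasDerivWithinAt) fun r hr => ?_
  rw [← NNReal.coe_le_coe, coe_nnnorm, norm_mul, Real.norm_of_nonneg hr.1]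
  exact (mul_le_of_le_one_left (norm_nonneg _) hr.2).trans (abs_radialMean_le hM hr)

lemma abs_clampedLaplacian_le {M : NNReal} (hM : ∀ r ∈ Icc (0 : ℝ) 1, |h r| ≤ M)
    (hr : r ∈ Icc (0 : ℝ) 1) : |clampedLaplacian m h r| ≤ 2 * M := by
  have hpot : ∀ s ∈ Icc (0 : ℝ) 1, |radialPotential m h s| ≤ M := fun s hs => by
    have hlip :=
      (radialPotential_lipschitzOnWith (m := m) hM).dist_le_mul s hs 0 ⟨le_rfl, zero_le_one⟩
    rw [radialPotential_zero, Real.dist_0_eq_abs, Real.dist_0_eq_abs, abs_of_nonneg hs.1] at hlip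
    exact hlip.trans (mul_le_of_le_one_right M.2 hs.2)
  have hmean : |((m : ℝ) + 1) * radialIntegral m (radialPotential m h)| ≤ M := by
    have hpos : (0 : ℝ) < m + 1 := by positivity
    have hint := abs_radialIntegral_le (m := m) hpot
    rwa [← div_eq_mul_inv, le_div_iff₀' hpos, ← abs_of_pos hpos, ← abs_mul] at hint
  rw [clampedLaplacian_apply, two_mul]
  exact (abs_sub _ _).trans (add_le_add (hpot r hr) hmean)

lemma clampedGreen_lipschitzOnWith {M : NNReal} (hM : ∀ r ∈ Icc (0 : ℝ) 1, |h r| ≤ M) :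
    LipschitzOnWith (2 * M) (clampedGreen m h) (Icc 0 1) := by
  have hlip := radialPotential_lipschitzOnWith (m := m) (h := clampedLaplacian m h) (M := 2 * M)
    fun r hr => by simpa using abs_clampedLaplacian_le hM hr
  exact fun r hr s hs => by simpa only [clampedGreen_apply, edist_sub_right] using hlip hr hs

lemma radialIntegral_mul_radialPotential (f h : C(ℝ, ℝ)) :
    radialIntegral m (f * radialPotential m h) =
      radialIntegral m f * radialPotential m h 1 -
        radialIntegral m (.id ℝ ^ 2 * (radialMean m f * radialMean m h)) := by
  have hparts := intervalIntegral.integral_mul_deriv_eq_deriv_mul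
    (fun r _ => hasDerivAt_radialPotential (m := m) h r)
    (fun r _ => hasDerivAt_pow_mul_radialMean (m := m) f r)
    (Continuous.intervalIntegrable (by fun_prop) 0 1)
    (Continuous.intervalIntegrable (by fun_prop) 0 1)
  simp only [one_pow, one_mul, radialPotential_zero, zero_mul, sub_zero] at hparts
  calc radialIntegral m (f * radialPotential m h)
    _ = ∫ r in (0 : ℝ)..1, radialPotential m h r * (r ^ m * f r) := by
      rw [radialIntegral_eq_integral]
      congr with r
      rw [ContinuousMap.mul_apply]
      ring
    _ = radialPotential m h 1 * radialMean m f 1 -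
        ∫ r in (0 : ℝ)..1, r * radialMean m h r * (r ^ (m + 1) * radialMean m f r) := hparts
    _ = _ := by
      rw [mul_comm, radialIntegral_eq_integral m (.id ℝ ^ 2 * _)]
      congr 2 with r
      simp only [ContinuousMap.mul_apply, ContinuousMap.pow_apply, ContinuousMap.id_apply]
      ring

lemma radialIntegral_mul_clampedGreen (f h : C(ℝ, ℝ)) :
    radialIntegral m (f * clampedGreen m h) =
      radialIntegral m (clampedLaplacian m f * clampedLaplacian m h) := by
  have hgreen : f * clampedGreen m h = f * radialPotential m (clampedLaplacian m h) -
      radialPotential m (clampedLaplacian m h) 1 • f := by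
    ext r; simp [clampedGreen_apply]; ring
  have hlap : clampedLaplacian m f * clampedLaplacian m h =
      clampedLaplacian m h * radialPotential m f -
        (((m : ℝ) + 1) * radialIntegral m (radialPotential m f)) • clampedLaplacian m h := by
    ext r; simp [clampedLaplacian_apply]; ring
  rw [hgreen, hlap, map_sub, map_sub, map_smul, map_smul, radialIntegral_mul_radialPotential,
    radialIntegral_mul_radialPotential, radialIntegral_clampedLaplacian,
    mul_comm (radialMean m f) (radialMean m (clampedLaplacian m h))]
  simp only [smul_eq_mul]
  ring

end RadialOperators

section Stability

lemma le_of_sq_le_mul_of_bddAbove {o : ℕ → ℝ} (hnonneg : ∀ j, 0 ≤ o j)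
    (hconvex : ∀ j, o (j + 1) ^ 2 ≤ o j * o (j + 2)) (hbdd : BddAbove (range o)) : o 1 ≤ o 0 := by
  by_contra! hlt
  have hgrowth : ∀ j, 0 < o j ∧ o 1 * o j ≤ o 0 * o (j + 1) := fun j => by
    induction j with
    | zero =>
      refine ⟨(hnonneg 0).lt_of_ne fun h0 => ?_, (mul_comm _ _).le⟩
      have := hconvex 0
      rw [← h0] at this hlt
      nlinarith
    | succ j ih =>
      have hpos : 0 < o (j + 1) :=
        pos_of_mul_pos_right ((mul_pos ((hnonneg 0).trans_lt hlt) ih.1).trans_le ih.2) (hnonneg 0)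
      refine ⟨hpos, le_of_mul_le_mul_left ?_ (mul_pos ih.1 hpos)⟩
      nlinarith [mul_le_mul_of_nonneg_left (hconvex j) (hnonneg 0),
        mul_le_mul_of_nonneg_right ih.2 (sq_nonneg (o (j + 1)))]
  have h0 : 0 < o 0 := (hgrowth 0).1
  have hgeom : ∀ j, o 0 * (o 1 / o 0) ^ j ≤ o j := fun j => by
    induction j with
    | zero => simp
    | succ j ih =>
      have hstep : o 1 / o 0 * o j ≤ o (j + 1) := by
        rw [div_mul_eq_mul_div, div_le_iff₀' h0]
        exact (hgrowth j).2
      rw [pow_succ', mul_left_comm]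
      exact (mul_le_mul_of_nonneg_left ih (by positivity [hnonneg 1])).trans hstep
  obtain ⟨C, hC⟩ := hbdd
  obtain ⟨j, hj⟩ := pow_unbounded_of_one_lt (C / o 0) ((one_lt_div h0).2 hlt)
  rw [div_lt_iff₀' h0] at hj
  exact (hj.trans_le (hgeom j)).not_ge (hC (mem_range_self j))

lemma apply_map_self_le_of_bddAbove {V : Type*} [AddCommGroup V] [Module ℝ V]
    {B : LinearMap.BilinForm ℝ V} (hsymm : LinearMap.IsSymm B) (hnonneg : ∀ v, 0 ≤ B v v)
    {K : V →ₗ[ℝ] V} (hK : ∀ v w, B (K v) w = B v (K w)) {v : V}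
    (hbdd : BddAbove (range fun j : ℕ => B ((K ^ j) v) ((K ^ j) v))) : B v (K v) ≤ B v v := by
  have hconvex (j : ℕ) : B ((K ^ (j + 1)) v) ((K ^ (j + 1)) v) ^ 2 ≤
      B ((K ^ j) v) ((K ^ j) v) * B ((K ^ (j + 2)) v) ((K ^ (j + 2)) v) := by
    have hshift : B ((K ^ (j + 1)) v) ((K ^ (j + 1)) v) = B ((K ^ j) v) ((K ^ (j + 2)) v) := by
      rw [pow_succ' K (j + 1), Module.End.mul_apply, ← hK, pow_succ' K j, Module.End.mul_apply]
    rw [hshift]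
    exact B.apply_sq_le_of_symm hnonneg hsymm _ _
  have hdecay : B (K v) (K v) ≤ B v v := by
    simpa using le_of_sq_le_mul_of_bddAbove (fun j => hnonneg _) hconvex hbdd
  refine le_of_sq_le_sq ?_ (hnonneg v)
  calc B v (K v) ^ 2 ≤ B v v * B (K v) (K v) := B.apply_sq_le_of_symm hnonneg hsymm _ _
    _ ≤ B v v * B v v := mul_le_mul_of_nonneg_left hdecay (hnonneg v)
    _ = B v v ^ 2 := (sq _).symm

/-- The energy form `(f, h) ↦ ∫_B f G h` of the clamped Green operator. -/
noncomputable def greenForm (m : ℕ) : LinearMap.BilinForm ℝ C(ℝ, ℝ) :=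
  ((LinearMap.mul ℝ C(ℝ, ℝ)).compl₂ (clampedGreen m)).compr₂ (radialIntegral m)

variable {m : ℕ}

lemma greenForm_apply (f h : C(ℝ, ℝ)) :
    greenForm m f h = radialIntegral m (f * clampedGreen m h) := rfl

lemma greenForm_isSymm : LinearMap.IsSymm (greenForm m) :=
  ⟨fun f h => by simp only [greenForm_apply, radialIntegral_mul_clampedGreen, mul_comm,
    RingHom.id_apply]⟩

lemma greenForm_self_nonneg (f : C(ℝ, ℝ)) : 0 ≤ greenForm m f f := by
  rw [greenForm_apply, radialIntegral_mul_clampedGreen]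
  exact radialIntegral_nonneg fun r _ => mul_self_nonneg _

/-- Stability of the linearised operator `Δ² - a` below a positive super-solution: `q` is the
bilaplacian of the super-solution `G q`, and the powers of `a G` stay bounded by it. -/
lemma radialIntegral_mul_sq_clampedGreen_le {a g q : C(ℝ, ℝ)} {M : ℝ} (hM : 0 ≤ M)
    (ha : ∀ r ∈ Icc (0 : ℝ) 1, 0 ≤ a r) (hg : ∀ r ∈ Icc (0 : ℝ) 1, 0 ≤ g r)
    (hgq : ∀ r ∈ Icc (0 : ℝ) 1, g r ≤ M * q r)
    (hq : ∀ r ∈ Icc (0 : ℝ) 1, a r * clampedGreen m q r ≤ q r) :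
    radialIntegral m (a * clampedGreen m g ^ 2) ≤ radialIntegral m (g * clampedGreen m g) := by
  set K : C(ℝ, ℝ) →ₗ[ℝ] C(ℝ, ℝ) := LinearMap.mulLeft ℝ a ∘ₗ clampedGreen m with hKdef
  have hK_apply (f : C(ℝ, ℝ)) (r : ℝ) : K f r = a r * clampedGreen m f r := rfl
  have hbound (j : ℕ) : ∀ r ∈ Icc (0 : ℝ) 1, 0 ≤ (K ^ j) g r ∧ (K ^ j) g r ≤ M * q r := by
    induction j with
    | zero => exact fun r hr => ⟨hg r hr, hgq r hr⟩
    | succ j ih =>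
      intro r hr
      have hle : clampedGreen m ((K ^ j) g) r ≤ M * clampedGreen m q r :=
        (clampedGreen_mono (g := M • q) (fun s hs => (ih s hs).2) hr).trans_eq (by simp)
      rw [pow_succ', Module.End.mul_apply, hK_apply]
      refine ⟨mul_nonneg (ha r hr) (clampedGreen_nonneg (fun s hs => (ih s hs).1) hr), ?_⟩
      calc a r * clampedGreen m ((K ^ j) g) r ≤ a r * (M * clampedGreen m q r) :=
            mul_le_mul_of_nonneg_left hle (ha r hr)
        _ = M * (a r * clampedGreen m q r) := mul_left_comm _ _ _
        _ ≤ M * q r := mul_le_mul_of_nonneg_left (hq r hr) hM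
  have hbdd : BddAbove (range fun j : ℕ => greenForm m ((K ^ j) g) ((K ^ j) g)) := by
    refine ⟨greenForm m (M • q) (M • q), ?_⟩
    rintro _ ⟨j, rfl⟩
    exact radialIntegral_mono fun r hr => mul_le_mul (hbound j r hr).2
      (clampedGreen_mono (fun s hs => (hbound j s hs).2) hr)
      (clampedGreen_nonneg (fun s hs => (hbound j s hs).1) hr)
      ((hbound j r hr).1.trans (hbound j r hr).2)
  have hself (f h : C(ℝ, ℝ)) : greenForm m (K f) h = greenForm m f (K h) := by
    rw [← greenForm_isSymm.eq (K h) f]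
    simp only [greenForm_apply, hKdef, LinearMap.comp_apply, LinearMap.mulLeft_apply, mul_assoc,
      mul_comm (clampedGreen m f), RingHom.id_apply]
  have hmain := apply_map_self_le_of_bddAbove greenForm_isSymm greenForm_self_nonneg hself hbdd
  rw [← hself] at hmain
  simpa only [greenForm_apply, hKdef, LinearMap.comp_apply, LinearMap.mulLeft_apply, mul_assoc,
    sq] using hmain

end Stability

section FixedPoint

-- Knaster–Tarski: the fixed point is the supremum of the `K`-Lipschitz `v` with `v ≤ T v`, and the
-- common Lipschitz constant is what keeps the supremum continuous.
lemma exists_mem_Icc_fixedPoint {X : Type*} [PseudoMetricSpace X] {K : NNReal} {a b : C(X, ℝ)}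
    {T : C(X, ℝ) → C(X, ℝ)} (hab : a ≤ b) (hmono : MonotoneOn T (Icc a b)) (ha : a ≤ T a)
    (hb : T b ≤ b) (hlipa : LipschitzWith K a) (hlip : ∀ v ∈ Icc a b, LipschitzWith K (T v)) :
    ∃ v ∈ Icc a b, T v = v := by
  have hmem : ∀ v ∈ Icc a b, T v ∈ Icc a b := fun v hv =>
    ⟨ha.trans (hmono ⟨le_rfl, hab⟩ hv hv.1), (hmono hv ⟨hab, le_rfl⟩ hv.2).trans hb⟩
  let S : Set C(X, ℝ) := {v | v ∈ Icc a b ∧ LipschitzWith K v ∧ v ≤ T v}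
  have haS : a ∈ S := ⟨⟨le_rfl, hab⟩, hlipa, ha⟩
  have : Nonempty S := ⟨⟨a, haS⟩⟩
  have hbdd (x : X) : BddAbove (range fun v : S => v.1 x) :=
    ⟨b x, by rintro _ ⟨v, rfl⟩; exact v.2.1.2 x⟩
  have hsup : LipschitzWith K fun x => ⨆ v : S, v.1 x :=
    LipschitzWith.of_le_add_mul K fun x y => ciSup_le fun v =>
      (v.2.2.1.le_add_mul x y).trans (by gcongr; exact le_ciSup (hbdd y) v)
  let u : C(X, ℝ) := ⟨_, hsup.continuous⟩
  have hle_u : ∀ v ∈ S, v ≤ u := fun v hv x => le_ciSup (hbdd x) ⟨v, hv⟩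
  have hu : u ∈ Icc a b := ⟨hle_u a haS, fun x => ciSup_le fun v => v.2.1.2 x⟩
  have hu_le : u ≤ T u := fun x => ciSup_le fun v =>
    (v.2.2.2 x).trans (hmono v.2.1 hu (hle_u v v.2) x)
  refine ⟨u, hu, le_antisymm (hle_u (T u) ⟨hmem u hu, hlip u hu, ?_⟩) hu_le⟩
  exact hmono hu (hmem u hu) hu_le

end FixedPoint

section RadialProfile

/-- `Phi α β` as a function of the radius. -/
noncomputable def radialPhi (α β : ℝ) : C(ℝ, ℝ) where
  toFun r := α - β / 2 + β / 2 * r ^ 2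

/-- A radial solution of `(P)_{λ,α,β}` in dimension `m + 1`, written as the integral equation
`u = Φ + G (λ (1 - u)⁻²)` on `[0, 1]`. The function `y = (1 - u)⁻¹` is part of the data so that its
powers are continuous functions; the values of `u` and `y` outside `[0, 1]` are immaterial. -/
structure IsRadialProfile (m : ℕ) (lam α β : ℝ) (u y : C(ℝ, ℝ)) : Prop where
  lt_one : ∀ r, u r < 1
  gapInv_eq : ∀ r, y r = (1 - u r)⁻¹
  green_eq : ∀ r ∈ Icc (0 : ℝ) 1, u r = radialPhi α β r + clampedGreen m (lam • y ^ 2) r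

variable {m : ℕ} {lam mu α β : ℝ} {u v y z : C(ℝ, ℝ)}

lemma radialPhi_apply (r : ℝ) : radialPhi α β r = α - β / 2 + β / 2 * r ^ 2 := rfl

lemma IsRadialProfile.gapInv_pos (hu : IsRadialProfile m lam α β u y) (r : ℝ) : 0 < y r := by
  rw [hu.gapInv_eq]
  exact inv_pos.2 (sub_pos.2 (hu.lt_one r))

lemma IsRadialProfile.gapInv_mul (hu : IsRadialProfile m lam α β u y) (r : ℝ) :
    y r * (1 - u r) = 1 := by
  rw [hu.gapInv_eq]
  exact inv_mul_cancel₀ (sub_pos.2 (hu.lt_one r)).ne'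

lemma IsRadialProfile.gapInv_le (hu : IsRadialProfile m lam α β u y)
    (hv : IsRadialProfile m mu α β v z) {r : ℝ} (h : u r ≤ v r) : y r ≤ z r := by
  rw [hu.gapInv_eq, hv.gapInv_eq]
  exact inv_anti₀ (sub_pos.2 (hv.lt_one r)) (by linarith)

lemma IsRadialProfile.clampedGreen_eq (hu : IsRadialProfile m lam α β u y) {r : ℝ}
    (hr : r ∈ Icc (0 : ℝ) 1) : clampedGreen m (lam • y ^ 2) r = u r - radialPhi α β r := by
  rw [hu.green_eq r hr, add_sub_cancel_left]

lemma two_mul_inv_cube_mul_sub_le {s t : ℝ} (hs : 0 < s) (ht : 0 < t) :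
    2 * s⁻¹ ^ 3 * (s - t) ≤ t⁻¹ ^ 2 - s⁻¹ ^ 2 := by
  have hgap : t⁻¹ ^ 2 - s⁻¹ ^ 2 - 2 * s⁻¹ ^ 3 * (s - t) =
      (s - t) ^ 2 * (s + 2 * t) / (s ^ 3 * t ^ 2) := by
    field_simp
    ring
  rw [← sub_nonneg, hgap]
  positivity

lemma IsRadialProfile.radialIntegral_mul_clampedGreen_eq (hu : IsRadialProfile m lam α β u y)
    (f : C(ℝ, ℝ)) : radialIntegral m (f * clampedGreen m (lam • y ^ 2)) =
      radialIntegral m (f * (u - radialPhi α β)) :=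
  radialIntegral_congr fun r hr => by
    simp only [ContinuousMap.mul_apply, ContinuousMap.sub_apply, hu.clampedGreen_eq hr]

lemma IsRadialProfile.radialIntegral_mul_sq_clampedGreen_eq (hu : IsRadialProfile m lam α β u y)
    (f : C(ℝ, ℝ)) : radialIntegral m (f * clampedGreen m (lam • y ^ 2) ^ 2) =
      radialIntegral m (f * (u - radialPhi α β) ^ 2) :=
  radialIntegral_congr fun r hr => by
    simp only [ContinuousMap.mul_apply, ContinuousMap.pow_apply, ContinuousMap.sub_apply,
      hu.clampedGreen_eq hr]

/-- Semi-stability of a solution lying below a solution for a larger voltage, tested against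
`u - Φ`. -/
lemma IsRadialProfile.stability (hu : IsRadialProfile m lam α β u y)
    (hv : IsRadialProfile m mu α β v z) (hlam : 0 < lam) (hmu : lam < mu)
    (huv : ∀ r ∈ Icc (0 : ℝ) 1, u r ≤ v r) :
    2 * radialIntegral m (y ^ 3 * (u - radialPhi α β) ^ 2) ≤
      radialIntegral m (y ^ 2 * (u - radialPhi α β)) := by
  have hsource (r : ℝ) (hr : r ∈ Icc (0 : ℝ) 1) :
      (mu - lam) * y r ^ 2 ≤ mu * z r ^ 2 - lam * y r ^ 2 := by
    have := pow_le_pow_left₀ (hu.gapInv_pos r).le (hu.gapInv_le hv (huv r hr)) 2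
    nlinarith
  have hconvex (r : ℝ) : 2 * y r ^ 3 * (v r - u r) ≤ z r ^ 2 - y r ^ 2 := by
    rw [hu.gapInv_eq, hv.gapInv_eq, ← sub_sub_sub_cancel_left (u r) (v r) 1]
    exact two_mul_inv_cube_mul_sub_le (sub_pos.2 (hu.lt_one r)) (sub_pos.2 (hv.lt_one r))
  have hsuper (r : ℝ) (hr : r ∈ Icc (0 : ℝ) 1) :
      2 * lam * y r ^ 3 * clampedGreen m (mu • z ^ 2 - lam • y ^ 2) r ≤
        mu * z r ^ 2 - lam * y r ^ 2 := by
    rw [map_sub, ContinuousMap.sub_apply, hu.clampedGreen_eq hr, hv.clampedGreen_eq hr]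
    nlinarith [mul_le_mul_of_nonneg_left (hconvex r) hlam.le, sq_nonneg (z r)]
  have hstable : radialIntegral m ((2 * lam) • y ^ 3 * clampedGreen m (lam • y ^ 2) ^ 2) ≤
      radialIntegral m (lam • y ^ 2 * clampedGreen m (lam • y ^ 2)) := by
    refine radialIntegral_mul_sq_clampedGreen_le (q := mu • z ^ 2 - lam • y ^ 2)
      (M := lam / (mu - lam)) (div_nonneg hlam.le (sub_pos.2 hmu).le) (fun r _ => ?_)
      (fun r _ => ?_) (fun r hr => ?_) hsuper
    · exact mul_nonneg (by positivity) (pow_pos (hu.gapInv_pos r) 3).le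
    · exact mul_nonneg hlam.le (sq_nonneg (y r))
    · rw [div_mul_eq_mul_div, le_div_iff₀ (sub_pos.2 hmu)]
      calc lam * y r ^ 2 * (mu - lam) = lam * ((mu - lam) * y r ^ 2) := by ring
        _ ≤ lam * (mu * z r ^ 2 - lam * y r ^ 2) :=
          mul_le_mul_of_nonneg_left (hsource r hr) hlam.le
  rw [hu.radialIntegral_mul_clampedGreen_eq, hu.radialIntegral_mul_sq_clampedGreen_eq,
    smul_mul_assoc, smul_mul_assoc, map_smul, map_smul, smul_eq_mul, smul_eq_mul, mul_comm 2 lam,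
    mul_assoc] at hstable
  exact le_of_mul_le_mul_left hstable hlam

-- With `y = (1 - u)⁻¹`, `p = (1 - Φ) y` and `z = e y`, where `e ≤ 1 - Φ`, the last term is
-- `e (2 (u - Φ)² y³ - (u - Φ) y²)`, whose integral is nonpositive by stability.
lemma cube_le_add_mul {z p : ℝ} (hz : 0 ≤ z) (hzp : z ≤ p) :
    z ^ 3 ≤ 18 + z * (2 * (p - 1) ^ 2 - (p - 1)) := by
  have hquad : 3 / 2 * z ^ 2 - 19 / 2 ≤ 2 * (p - 1) ^ 2 - (p - 1) := by
    nlinarith [sq_nonneg (p - 5), pow_le_pow_left₀ hz hzp 2]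
  nlinarith [mul_le_mul_of_nonneg_left hquad hz, mul_nonneg hz (sq_nonneg (z - 5 / 2)),
    sq_nonneg (z - 5 / 2)]

lemma le_radialPhi (hβ : β ≤ 0) {r : ℝ} (hr : r ∈ Icc (0 : ℝ) 1) : α ≤ radialPhi α β r := by
  have := pow_le_one₀ (n := 2) hr.1 hr.2
  rw [radialPhi_apply]
  nlinarith

lemma IsRadialProfile.radialIntegral_gapInv_cube_le (hadm : Admissible α β)
    (hu : IsRadialProfile m lam α β u y)
    (hstable : 2 * radialIntegral m (y ^ 3 * (u - radialPhi α β) ^ 2) ≤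
      radialIntegral m (y ^ 2 * (u - radialPhi α β))) :
    radialIntegral m (y ^ 3) ≤ 18 / ((1 - (α - β / 2)) ^ 3 * (m + 1)) := by
  obtain ⟨e, he_def⟩ : ∃ e, e = 1 - (α - β / 2) := ⟨_, rfl⟩
  have he : 0 < e := he_def ▸ sub_pos.2 hadm.2
  have hpoint (r : ℝ) (_ : r ∈ Icc (0 : ℝ) 1) : (e ^ 3 • y ^ 3 : C(ℝ, ℝ)) r ≤
      ((18 : ℝ) • 1 + e • ((2 : ℝ) • (y ^ 3 * (u - radialPhi α β) ^ 2) -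
        y ^ 2 * (u - radialPhi α β)) : C(ℝ, ℝ)) r := by
    have hcube := cube_le_add_mul (mul_nonneg he.le (hu.gapInv_pos r).le) <|
      mul_le_mul_of_nonneg_right
        (show e ≤ 1 - radialPhi α β r by
          rw [radialPhi_apply]; nlinarith [hadm.1, sq_nonneg r]) (hu.gapInv_pos r).le
    have hgap : (1 - radialPhi α β r) * y r - 1 = y r * (u r - radialPhi α β r) := by
      linear_combination hu.gapInv_mul r
    rw [hgap] at hcube
    simp only [ContinuousMap.add_apply, ContinuousMap.sub_apply, ContinuousMap.smul_apply,
      ContinuousMap.mul_apply, ContinuousMap.pow_apply, ContinuousMap.one_apply, smul_eq_mul]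
    linear_combination hcube
  have hint := radialIntegral_mono (m := m) hpoint
  simp only [map_add, map_smul, map_sub, radialIntegral_one, smul_eq_mul] at hint
  have hdrop : e ^ 3 * radialIntegral m (y ^ 3) ≤ 18 * ((m : ℝ) + 1)⁻¹ :=
    hint.trans (by nlinarith)
  rw [← he_def, le_div_iff₀ (by positivity)]
  calc radialIntegral m (y ^ 3) * (e ^ 3 * (m + 1))
    _ = e ^ 3 * radialIntegral m (y ^ 3) * (m + 1) := by ring
    _ ≤ 18 * ((m : ℝ) + 1)⁻¹ * (m + 1) := mul_le_mul_of_nonneg_right hdrop (by positivity)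
    _ = 18 := by field_simp

lemma Admissible.lt_one (hadm : Admissible α β) : α < 1 := by
  linarith [hadm.1, hadm.2]

lemma IsRadialProfile.radialIntegral_sq_clampedLaplacian_le (hadm : Admissible α β)
    (hlam : 0 ≤ lam) (hu : IsRadialProfile m lam α β u y) :
    radialIntegral m (clampedLaplacian m (lam • y ^ 2) ^ 2) ≤
      lam * (1 - α) * (((m : ℝ) + 1)⁻¹ + radialIntegral m (y ^ 3)) := by
  have hpoint (r : ℝ) (hr : r ∈ Icc (0 : ℝ) 1) : (y ^ 2 * (u - radialPhi α β)) r ≤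
      ((1 - α) • (1 + y ^ 3) : C(ℝ, ℝ)) r := by
    have hgap : u r - radialPhi α β r ≤ 1 - α :=
      sub_le_sub (hu.lt_one r).le (le_radialPhi hadm.1 hr)
    have hsq : y r ^ 2 ≤ 1 + y r ^ 3 := by
      nlinarith [hu.gapInv_pos r, sq_nonneg (y r - 1)]
    calc y r ^ 2 * (u r - radialPhi α β r)
      _ ≤ y r ^ 2 * (1 - α) := mul_le_mul_of_nonneg_left hgap (sq_nonneg _)
      _ ≤ (1 + y r ^ 3) * (1 - α) := mul_le_mul_of_nonneg_right hsq (sub_nonneg.2 hadm.lt_one.le)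
      _ = (1 - α) * (1 + y r ^ 3) := mul_comm _ _
  rw [sq, ← radialIntegral_mul_clampedGreen, hu.radialIntegral_mul_clampedGreen_eq, smul_mul_assoc,
    map_smul, smul_eq_mul, mul_assoc]
  refine mul_le_mul_of_nonneg_left ?_ hlam
  simpa only [map_smul, map_add, radialIntegral_one, smul_eq_mul] using
    radialIntegral_mono (m := m) hpoint

lemma radialIntegral_sq_add_clampedLaplacian (c : ℝ) (h : C(ℝ, ℝ)) :
    radialIntegral m ((c • 1 + clampedLaplacian m h) ^ 2) =
      c ^ 2 * ((m : ℝ) + 1)⁻¹ + radialIntegral m (clampedLaplacian m h ^ 2) := by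
  have hsq : (c • 1 + clampedLaplacian m h) ^ 2 =
      (c ^ 2) • 1 + (2 * c) • clampedLaplacian m h + clampedLaplacian m h ^ 2 := by
    ext r
    simp only [ContinuousMap.add_apply, ContinuousMap.smul_apply, ContinuousMap.pow_apply,
      ContinuousMap.one_apply, smul_eq_mul]
    ring
  simp only [hsq, map_add, map_smul, radialIntegral_one, radialIntegral_clampedLaplacian,
    smul_eq_mul, mul_zero, add_zero]

end RadialProfile

section SubAndSuperSolutions

/-- The retraction of `ℝ` onto the range `[0, 1]` of radii, which extends radial functions on the
unit ball to the whole line. -/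
noncomputable def unitClamp : C(ℝ, ℝ) where
  toFun r := projIcc (0 : ℝ) 1 zero_le_one r
  continuous_toFun := continuous_subtype_val.comp continuous_projIcc

lemma unitClamp_mem (r : ℝ) : unitClamp r ∈ Icc (0 : ℝ) 1 := (projIcc 0 1 zero_le_one r).2

lemma unitClamp_of_mem {r : ℝ} (hr : r ∈ Icc (0 : ℝ) 1) : unitClamp r = r :=
  congrArg Subtype.val (projIcc_of_mem zero_le_one hr)

lemma lipschitzWith_comp_unitClamp {K : NNReal} {h : C(ℝ, ℝ)}
    (hh : LipschitzOnWith K h (Icc 0 1)) : LipschitzWith K (h.comp unitClamp) := by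
  have hclamp : LipschitzWith 1 unitClamp :=
    LipschitzWith.projIcc (zero_le_one (α := ℝ))
  simpa using lipschitzOnWith_univ.1
    (hh.comp hclamp.lipschitzOnWith fun r _ => unitClamp_mem r)

variable {m : ℕ} {lam mu α β : ℝ}

lemma exists_eq_add_clampedGreen_comp {K : NNReal} {κ : ℝ} {φ v f : C(ℝ, ℝ)}
    (hφ : LipschitzOnWith K φ (Icc 0 1)) (hf : MonotoneOn f (Iic κ)) (hf0 : ∀ t, 0 ≤ f t)
    (hvκ : ∀ r ∈ Icc (0 : ℝ) 1, v r ≤ κ)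
    (hv : ∀ r ∈ Icc (0 : ℝ) 1, φ r + clampedGreen m (f.comp v) r ≤ v r) :
    ∃ u : C(ℝ, ℝ), (∀ r, u r ≤ κ) ∧ (∀ r ∈ Icc (0 : ℝ) 1, u r ≤ v r) ∧
      ∀ r ∈ Icc (0 : ℝ) 1, u r = φ r + clampedGreen m (f.comp u) r := by
  let T (w : C(ℝ, ℝ)) : C(ℝ, ℝ) := (φ + clampedGreen m (f.comp w)).comp unitClamp
  have hT (w : C(ℝ, ℝ)) (r : ℝ) :
    T w r = φ (unitClamp r) + clampedGreen m (f.comp w) (unitClamp r) := rfl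
  have hφT (w : C(ℝ, ℝ)) : φ.comp unitClamp ≤ T w := fun r =>
    le_add_of_nonneg_right (clampedGreen_nonneg (fun s _ => hf0 (w s)) (unitClamp_mem r))
  have hTv : T (v.comp unitClamp) ≤ v.comp unitClamp := fun r => by
    have hcongr : clampedGreen m (f.comp (v.comp unitClamp)) (unitClamp r) =
        clampedGreen m (f.comp v) (unitClamp r) :=
      clampedGreen_congr (fun s hs => by simp [unitClamp_of_mem hs]) (unitClamp_mem r)
    change T (v.comp unitClamp) r ≤ _
    rw [hT, hcongr]
    exact hv _ (unitClamp_mem r)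
  have hκ {w : C(ℝ, ℝ)} (hw : w ≤ v.comp unitClamp) (r : ℝ) : w r ≤ κ :=
    (hw r).trans (hvκ _ (unitClamp_mem r))
  have hfκ {w : C(ℝ, ℝ)} (hw : w ≤ v.comp unitClamp) (r : ℝ) : |f (w r)| ≤ (f κ).toNNReal := by
    rw [abs_of_nonneg (hf0 _), Real.coe_toNNReal _ (hf0 _)]
    exact hf (hκ hw r) self_mem_Iic (hκ hw r)
  obtain ⟨u, hu, hfix⟩ := exists_mem_Icc_fixedPoint (K := K + 2 * (f κ).toNNReal) (T := T)
    ((hφT _).trans hTv)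
    (fun w₁ h₁ w₂ h₂ h r => add_le_add_right (clampedGreen_mono
      (fun s _ => hf (hκ h₁.2 s) (hκ h₂.2 s) (h s)) (unitClamp_mem r)) _)
    (hφT _) hTv
    ((lipschitzWith_comp_unitClamp hφ).weaken le_self_add)
    (fun w hw => lipschitzWith_comp_unitClamp
      (hφ.add (clampedGreen_lipschitzOnWith fun r _ => hfκ hw.2 r)))
  refine ⟨u, hκ hu.2, fun r hr => (hu.2 r).trans_eq ?_, fun r hr => ?_⟩
  · exact congrArg v (unitClamp_of_mem hr)
  · rw [← unitClamp_of_mem hr, ← hT, hfix, unitClamp_of_mem hr]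

lemma exists_contDiff_pos_eq_self {ε : ℝ} (hε : 0 < ε) :
    ∃ p : ℝ → ℝ, ContDiff ℝ ∞ p ∧ (∀ s, 0 < p s) ∧ ∀ s, ε ≤ s → p s = s := by
  let χ (s : ℝ) : ℝ := Real.smoothTransition (2 * s / ε - 1)
  refine ⟨fun s => χ s * s + (1 - χ s) * ε, ?_, fun s => ?_, fun s hs => ?_⟩
  · have hχ : ContDiff ℝ ∞ χ := Real.smoothTransition.contDiff.comp (by fun_prop)
    fun_prop
  · rcases le_or_gt s (ε / 2) with hs | hs
    · have hχ : χ s = 0 := Real.smoothTransition.zero_of_nonpos <| by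
        rw [sub_nonpos, div_le_one hε]; linarith
      simpa [hχ] using hε
    · have hχ0 : 0 ≤ χ s := Real.smoothTransition.nonneg _
      have hχ1 : χ s ≤ 1 := Real.smoothTransition.le_one _
      nlinarith
  · have hχ : χ s = 1 := Real.smoothTransition.one_of_one_le <| by
      rw [le_sub_iff_add_le, le_div_iff₀ hε]; linarith
    simp [hχ]

lemma exists_contDiff_eq_inv_sq_one_sub {κ : ℝ} (hκ : κ < 1) :
    ∃ f : ℝ → ℝ, ContDiff ℝ ∞ f ∧ (∀ t, 0 ≤ f t) ∧ ∀ t ≤ κ, f t = (1 - t)⁻¹ ^ 2 := by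
  obtain ⟨p, hp, hpos, hself⟩ := exists_contDiff_pos_eq_self (sub_pos.2 hκ)
  refine ⟨fun t => (p (1 - t))⁻¹ ^ 2, ?_, fun t => sq_nonneg _, fun t ht => ?_⟩
  · exact ((hp.comp (contDiff_const.sub contDiff_id)).inv fun t => (hpos _).ne').pow 2
  · exact congrArg (·⁻¹ ^ 2) (hself _ (by linarith))

lemma exists_lt_one_forall_le {v : C(ℝ, ℝ)} (hv : ∀ r, v r < 1) :
    ∃ κ < 1, ∀ r ∈ Icc (0 : ℝ) 1, v r ≤ κ := by
  obtain ⟨s, -, hs⟩ := isCompact_Icc.exists_isMaxOn (nonempty_Icc.2 zero_le_one)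
    v.continuous.continuousOn
  exact ⟨v s, hv s, hs⟩

lemma radialPhi_lipschitzOnWith : LipschitzOnWith ‖β‖₊ (radialPhi α β) (Icc 0 1) := by
  refine LipschitzOnWith.of_dist_le_mul fun r hr s hs => ?_
  have habs : |r + s| ≤ 2 := by rw [abs_le]; constructor <;> linarith [hr.1, hr.2, hs.1, hs.2]
  have hfac : radialPhi α β r - radialPhi α β s = β / 2 * (r + s) * (r - s) := by
    simp only [radialPhi_apply]; ring
  rw [Real.dist_eq, Real.dist_eq, coe_nnnorm, Real.norm_eq_abs, hfac, abs_mul, abs_mul, abs_div,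
    abs_two]
  refine mul_le_mul_of_nonneg_right ?_ (abs_nonneg _)
  linarith [mul_le_mul_of_nonneg_left habs (abs_nonneg β)]

lemma IsRadialProfile.exists_le {v z : C(ℝ, ℝ)} (hv : IsRadialProfile m mu α β v z)
    (hlam : 0 ≤ lam) (hmu : lam ≤ mu) :
    ∃ u y, IsRadialProfile m lam α β u y ∧ ∀ r ∈ Icc (0 : ℝ) 1, u r ≤ v r := by
  obtain ⟨κ, hκ, hvκ⟩ := exists_lt_one_forall_le hv.lt_one
  obtain ⟨f, hf, hf0, hfκ⟩ := exists_contDiff_eq_inv_sq_one_sub hκ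
  let F : C(ℝ, ℝ) := ⟨fun t => lam * f t, continuous_const.mul hf.continuous⟩
  have hF : MonotoneOn F (Iic κ) := fun s hs t ht hst => by
    change lam * f s ≤ lam * f t
    rw [hfκ s hs, hfκ t ht]
    have htpos : 0 < 1 - t := by linarith [mem_Iic.1 ht]
    have hspos : 0 < 1 - s := by linarith
    gcongr
  obtain ⟨u, huκ, huv, hu⟩ := exists_eq_add_clampedGreen_comp (m := m) (f := F) (v := v)
    (radialPhi_lipschitzOnWith (α := α) (β := β)) hF (fun t => mul_nonneg hlam (hf0 t)) hvκ
    fun r hr => by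
      rw [hv.green_eq r hr]
      refine add_le_add_right (clampedGreen_mono (fun s hs => ?_) hr) _
      change lam * f (v s) ≤ mu * z s ^ 2
      rw [hfκ _ (hvκ s hs), hv.gapInv_eq]
      gcongr
  have hgap (r : ℝ) : 1 - u r ≠ 0 := (sub_pos.2 ((huκ r).trans_lt hκ)).ne'
  refine ⟨u, ⟨fun r => (1 - u r)⁻¹, (continuous_const.sub u.continuous).inv₀ hgap⟩,
    ⟨fun r => (huκ r).trans_lt hκ, fun r => rfl, fun r hr => (hu r hr).trans ?_⟩, huv⟩
  congr 3
  ext s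
  exact congrArg (lam * ·) (hfκ _ (huκ s))

end SubAndSuperSolutions

section RadialFunctions

lemma uniqueDiffOn_closedBall {E : Type*} [NormedAddCommGroup E] [NormedSpace ℝ E] (x : E) {r : ℝ}
    (hr : 0 < r) : UniqueDiffOn ℝ (closedBall x r) :=
  uniqueDiffOn_convex (convex_closedBall x r) <|
    (nonempty_ball.2 hr).mono (interior_maximal ball_subset_closedBall isOpen_ball)

variable {E : Type} [NormedAddCommGroup E] [InnerProductSpace ℝ E] {m : ℕ} {h : C(ℝ, ℝ)}

lemma hasFDerivAt_comp_norm {L : ℝ → ℝ} {a : ℝ} {x : E} (hL : HasDerivAt L (‖x‖ * a) ‖x‖) :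
    HasFDerivAt (fun y => L ‖y‖) (a • innerSL ℝ x) x := by
  rcases eq_or_ne x 0 with rfl | hx
  · rw [norm_zero, zero_mul, hasDerivAt_iff_isLittleO] at hL
    rw [hasFDerivAt_iff_isLittleO, ← Asymptotics.isLittleO_norm_right]
    simpa [Function.comp_def] using hL.comp_tendsto (tendsto_norm_zero (E := E))
  · have hnorm : HasFDerivAt (fun y : E => ‖y‖) (‖x‖⁻¹ • innerSL ℝ x) x := by
      have hsq := (hasStrictFDerivAt_norm_sq x).hasFDerivAt.sqrt (by positivity)
      simp only [Real.sqrt_sq (norm_nonneg _)] at hsq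
      exact hsq.congr_fderiv (by
        rw [← Nat.cast_smul_eq_nsmul ℝ, smul_smul, Nat.cast_ofNat]; congr 1; field_simp)
    refine (hL.comp_hasFDerivAt x hnorm).congr_fderiv ?_
    rw [smul_smul]
    congr 1
    field_simp

lemma hasFDerivAt_radialPotential_norm (h : C(ℝ, ℝ)) (x : E) :
    HasFDerivAt (fun y : E => radialPotential m h ‖y‖) (radialMean m h ‖x‖ • innerSL ℝ x) x :=
  hasFDerivAt_comp_norm (hasDerivAt_radialPotential h ‖x‖)

variable [FiniteDimensional ℝ E]

lemma contDiff_radialMean_norm {n : ℕ} (hh : ContDiff ℝ n fun x : E => h ‖x‖) :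
    ContDiff ℝ n fun x : E => radialMean m h ‖x‖ := by
  simpa only [radialMean_apply, ← dilationMean_comp_norm] using contDiff_dilationMean n m hh

lemma contDiff_radialPotential_norm {n : ℕ} (hh : ContDiff ℝ n fun x : E => h ‖x‖) :
    ContDiff ℝ (n + 1) fun x : E => radialPotential m h ‖x‖ := by
  rw [contDiff_succ_iff_fderiv]
  refine ⟨fun x => (hasFDerivAt_radialPotential_norm h x).differentiableAt, by simp, ?_⟩
  have hfderiv : fderiv ℝ (fun x : E => radialPotential m h ‖x‖) =
      fun x => radialMean m h ‖x‖ • innerSL ℝ x :=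
    funext fun x => (hasFDerivAt_radialPotential_norm h x).fderiv
  rw [hfderiv]
  exact (contDiff_radialMean_norm hh).smul (innerSL ℝ).contDiff

lemma lap_eq_of_fderiv_eq_smul {N : ℕ} {f a : EuclideanSpace ℝ (Fin N) → ℝ}
    {x : EuclideanSpace ℝ (Fin N)} (hf : ∀ᶠ y in 𝓝 x, fderiv ℝ f y = a y • innerSL ℝ y)
    (ha : DifferentiableAt ℝ a x) : lap f x = N * a x + fderiv ℝ a x x := by
  have hpartial (i : Fin N) :
      fderiv ℝ (fun y => fderiv ℝ f y (EuclideanSpace.single i 1)) x (EuclideanSpace.single i 1) =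
        a x + x i * fderiv ℝ a x (EuclideanSpace.single i 1) := by
    have heq : (fun y => fderiv ℝ f y (EuclideanSpace.single i 1)) =ᶠ[𝓝 x] fun y => a y * y i :=
      hf.mono fun y hy => by simp [hy, EuclideanSpace.inner_single_right]
    have hcoord : HasFDerivAt (fun y : EuclideanSpace ℝ (Fin N) => y i)
        (EuclideanSpace.proj (𝕜 := ℝ) i) x := (EuclideanSpace.proj (𝕜 := ℝ) i).hasFDerivAt
    rw [heq.fderiv_eq, (ha.hasFDerivAt.fun_mul hcoord).fderiv]
    simp
  have hx : ∑ i, x i • EuclideanSpace.single i (1 : ℝ) = x := by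
    simpa using (EuclideanSpace.basisFun (Fin N) ℝ).sum_repr x
  have hsum : ∑ i, x i * fderiv ℝ a x (EuclideanSpace.single i 1) = fderiv ℝ a x x := by
    conv_rhs => enter [2]; rw [← hx]
    simp only [map_sum, map_smul, smul_eq_mul]
  simp only [lap, hpartial, Finset.sum_add_distrib, hsum]
  simp

lemma lap_radialPotential_norm
    (hh : ContDiff ℝ 1 fun x : EuclideanSpace ℝ (Fin (m + 1)) => h ‖x‖)
    (x : EuclideanSpace ℝ (Fin (m + 1))) :
    lap (fun y : EuclideanSpace ℝ (Fin (m + 1)) => radialPotential m h ‖y‖) x = h ‖x‖ := by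
  have hmean : dilationMean m (fun y : EuclideanSpace ℝ (Fin (m + 1)) => h ‖y‖) =
      fun y => radialMean m h ‖y‖ := funext (dilationMean_comp_norm m h)
  have heuler := add_fderiv_dilationMean_self m hh x
  rw [hmean] at heuler
  rw [lap_eq_of_fderiv_eq_smul (.of_forall fun y => (hasFDerivAt_radialPotential_norm h y).fderiv)
    ((contDiff_radialMean_norm (n := 1) hh).differentiable one_ne_zero x)]
  simpa only [Nat.cast_succ, smul_eq_mul] using heuler

end RadialFunctions

section ClampedPlate

lemma lap_const_add {N : ℕ} (c : ℝ) (f : EuclideanSpace ℝ (Fin N) → ℝ)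
    (x : EuclideanSpace ℝ (Fin N)) : lap (fun y => c + f y) x = lap f x := by
  simp only [lap, fderiv_const_add]

variable {m : ℕ} {lam α β : ℝ} {h u y : C(ℝ, ℝ)}

lemma clampedGreen_pos (hh : ∀ r ∈ Icc (0 : ℝ) 1, 0 < h r) {r : ℝ} (hr : r ∈ Ico (0 : ℝ) 1) :
    0 < clampedGreen m h r := by
  obtain ⟨s, hs, hmin⟩ := isCompact_Icc.exists_isMinOn (nonempty_Icc.2 zero_le_one)
    h.continuous.continuousOn
  have hr2 : 0 < 1 - r ^ 2 := by nlinarith [hr.1, hr.2]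
  calc 0 < h s * ((8 * ((m : ℝ) + 1) * (m + 3))⁻¹ * (1 - r ^ 2) ^ 2) :=
        mul_pos (hh s hs) (by positivity)
    _ = clampedGreen m (h s • 1) r := by
        rw [map_smul, ContinuousMap.smul_apply, clampedGreen_one, smul_eq_mul]
    _ ≤ clampedGreen m h r :=
        clampedGreen_mono (fun t ht => by simpa using hmin ht) (Ico_subset_Icc_self hr)

/-- The Laplacian of `Φ + G h`, as a function of the radius. -/
noncomputable def plateLaplacian (m : ℕ) (β : ℝ) (h : C(ℝ, ℝ)) : C(ℝ, ℝ) :=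
  (((m : ℝ) + 1) * β) • 1 + clampedLaplacian m h

lemma plateLaplacian_apply (r : ℝ) : plateLaplacian m β h r =
    ((m + 1) * β - (m + 1) * radialIntegral m (radialPotential m h)) + radialPotential m h r := by
  simp only [plateLaplacian, ContinuousMap.add_apply, ContinuousMap.smul_apply,
    ContinuousMap.one_apply, smul_eq_mul, clampedLaplacian_apply]
  ring

lemma radialIntegral_plateLaplacian : radialIntegral m (plateLaplacian m β h) = β := by
  rw [plateLaplacian, map_add, map_smul, radialIntegral_one, radialIntegral_clampedLaplacian,
    smul_eq_mul]
  field_simp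
  ring

lemma radialPhi_add_clampedGreen_apply (r : ℝ) : (radialPhi α β + clampedGreen m h) r =
    (α - radialPotential m (plateLaplacian m β h) 1) +
      radialPotential m (plateLaplacian m β h) r := by
  simp only [plateLaplacian, map_add, map_smul, ContinuousMap.add_apply, ContinuousMap.smul_apply,
    radialPotential_one, smul_eq_mul, clampedGreen_apply, radialPhi_apply]
  field_simp
  ring

lemma radialPhi_add_clampedGreen_one : (radialPhi α β + clampedGreen m h) 1 = α := by
  rw [radialPhi_add_clampedGreen_apply, sub_add_cancel]

section Norm

variable {E : Type} [NormedAddCommGroup E] [InnerProductSpace ℝ E]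

lemma hasFDerivAt_radialPhi_add_clampedGreen_norm (h : C(ℝ, ℝ)) (x : E) :
    HasFDerivAt (fun y : E => (radialPhi α β + clampedGreen m h) ‖y‖)
      (radialMean m (plateLaplacian m β h) ‖x‖ • innerSL ℝ x) x := by
  simp only [radialPhi_add_clampedGreen_apply]
  exact (hasFDerivAt_radialPotential_norm _ x).const_add _

variable [FiniteDimensional ℝ E]

lemma contDiff_plateLaplacian_norm {n : ℕ} (hh : ContDiff ℝ n fun x : E => h ‖x‖) :
    ContDiff ℝ (n + 1) fun x : E => plateLaplacian m β h ‖x‖ := by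
  simp only [plateLaplacian_apply]
  exact contDiff_const.add (contDiff_radialPotential_norm hh)

lemma contDiff_radialPhi_add_clampedGreen_norm {n : ℕ} (hh : ContDiff ℝ n fun x : E => h ‖x‖) :
    ContDiff ℝ (n + 2) fun x : E => (radialPhi α β + clampedGreen m h) ‖x‖ := by
  simp only [radialPhi_add_clampedGreen_apply]
  have := contDiff_radialPotential_norm (m := m) (n := n + 1) <| by
    exact_mod_cast contDiff_plateLaplacian_norm (m := m) (β := β) hh
  exact contDiff_const.add (by exact_mod_cast this)

end Norm

lemma lap_plateLaplacian_norm
    (hh : ContDiff ℝ 1 fun x : EuclideanSpace ℝ (Fin (m + 1)) => h ‖x‖)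
    (x : EuclideanSpace ℝ (Fin (m + 1))) :
    lap (fun y : EuclideanSpace ℝ (Fin (m + 1)) => plateLaplacian m β h ‖y‖) x = h ‖x‖ := by
  simp only [plateLaplacian_apply, lap_const_add, lap_radialPotential_norm hh]

lemma lap_radialPhi_add_clampedGreen_norm (h : C(ℝ, ℝ)) (x : EuclideanSpace ℝ (Fin (m + 1))) :
    lap (fun y : EuclideanSpace ℝ (Fin (m + 1)) => (radialPhi α β + clampedGreen m h) ‖y‖) x =
      plateLaplacian m β h ‖x‖ := by
  simp only [radialPhi_add_clampedGreen_apply, lap_const_add]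
  exact lap_radialPotential_norm (by
    simpa using contDiff_plateLaplacian_norm (m := m) (β := β) (n := 0)
      (contDiff_zero.2 (h.continuous.comp continuous_norm))) x

lemma IsRadialProfile.exists_contDiff_source (hu : IsRadialProfile m lam α β u y) :
    ∃ g : C(ℝ, ℝ), (∀ r ∈ Icc (0 : ℝ) 1, g r = (lam • y ^ 2) r) ∧
      ContDiff ℝ 2 fun x : EuclideanSpace ℝ (Fin (m + 1)) => g ‖x‖ := by
  obtain ⟨κ, hκ, huκ⟩ := exists_lt_one_forall_le hu.lt_one
  obtain ⟨f, hf, -, hfκ⟩ := exists_contDiff_eq_inv_sq_one_sub hκ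
  let U : C(ℝ, ℝ) := radialPhi α β + clampedGreen m (lam • y ^ 2)
  refine ⟨⟨fun r => lam * f (U r), continuous_const.mul (hf.continuous.comp U.continuous)⟩,
    fun r hr => ?_, ?_⟩
  · have hUr : U r = u r := (hu.green_eq r hr).symm
    change lam * f (U r) = lam * y r ^ 2
    rw [hUr, hfκ _ (huκ r hr), hu.gapInv_eq]
  · have hU : ContDiff ℝ 2 fun x : EuclideanSpace ℝ (Fin (m + 1)) => U ‖x‖ := by
      simpa only [Nat.cast_zero, zero_add] using
        contDiff_radialPhi_add_clampedGreen_norm (m := m) (α := α) (β := β) (n := 0)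
          (contDiff_zero.2 ((lam • y ^ 2 : C(ℝ, ℝ)).continuous.comp continuous_norm))
    exact contDiff_const.mul ((hf.of_le (WithTop.coe_le_coe.2 le_top)).comp hU)

lemma IsRadialProfile.exists_isClassicalSolutionAB (hβ : β ≤ 0) (hlam : 0 < lam)
    (hu : IsRadialProfile m lam α β u y) :
    ∃ U, IsClassicalSolutionAB (m + 1) lam α β U ∧
      ∀ x ∈ closedBall (0 : EuclideanSpace ℝ (Fin (m + 1))) 1, U x = u ‖x‖ := by
  obtain ⟨g, hg, hg2⟩ := hu.exists_contDiff_source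
  have hgreen (r : ℝ) (hr : r ∈ Icc (0 : ℝ) 1) : (radialPhi α β + clampedGreen m g) r = u r := by
    rw [hu.green_eq r hr, ContinuousMap.add_apply, clampedGreen_congr hg hr]
  have hmem {x : EuclideanSpace ℝ (Fin (m + 1))} (hx : x ∈ ball 0 1) : ‖x‖ ∈ Ico (0 : ℝ) 1 :=
    ⟨norm_nonneg x, mem_ball_zero_iff.1 hx⟩
  have hmem' {x : EuclideanSpace ℝ (Fin (m + 1))} (hx : x ∈ ball 0 1) : ‖x‖ ∈ Icc (0 : ℝ) 1 :=
    Ico_subset_Icc_self (hmem hx)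
  refine ⟨fun x => (radialPhi α β + clampedGreen m g) ‖x‖, ?_, fun x hx =>
    hgreen _ ⟨norm_nonneg x, mem_closedBall_zero_iff.1 hx⟩⟩
  refine ⟨?_, fun x hx => ?_, fun x hx => ?_, fun x hx => ?_, fun x hx => ?_, fun x hx => ?_⟩
  · exact (contDiff_radialPhi_add_clampedGreen_norm (n := 2) hg2).contDiffOn
  · refine (le_radialPhi hβ (hmem' hx)).trans_lt
      (lt_add_of_pos_right _ (clampedGreen_pos ?_ (hmem hx)))
    intro r hr
    rw [hg r hr]
    exact mul_pos hlam (pow_pos (hu.gapInv_pos r) 2)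
  · rw [hgreen _ (hmem' hx)]
    exact hu.lt_one _
  · rw [biharm, funext (lap_radialPhi_add_clampedGreen_norm g),
      lap_plateLaplacian_norm (hg2.of_le one_le_two), hg _ (hmem' hx), hgreen _ (hmem' hx)]
    simp [hu.gapInv_eq, div_eq_mul_inv]
  · rw [hx, radialPhi_add_clampedGreen_one]
  · have hfd := hasFDerivAt_radialPhi_add_clampedGreen_norm (m := m) (α := α) (β := β) g x
    rw [hfd.hasFDerivWithinAt.fderivWithin (uniqueDiffOn_closedBall 0 one_pos x (by simp [hx])),
      smul_apply, innerSL_apply_apply, real_inner_self_eq_norm_sq, hx, one_pow,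
      smul_eq_mul, mul_one]
    exact radialIntegral_plateLaplacian

end ClampedPlate

section Isometries

variable {N : ℕ} {lam α β : ℝ} {u w : EuclideanSpace ℝ (Fin N) → ℝ} {x : EuclideanSpace ℝ (Fin N)}

lemma lap_congr {f g : EuclideanSpace ℝ (Fin N) → ℝ} (hfg : f =ᶠ[𝓝 x] g) : lap f x = lap g x := by
  refine Finset.sum_congr rfl fun i _ => ?_
  have hpartial : (fun y => fderiv ℝ f y (EuclideanSpace.single i 1)) =ᶠ[𝓝 x]
      fun y => fderiv ℝ g y (EuclideanSpace.single i 1) :=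
    (hfg.fderiv (𝕜 := ℝ)).mono fun y hy => by simp only [hy]
  rw [hpartial.fderiv_eq]

lemma contDiffOn_lap {n : ℕ} (hu : ContDiffOn ℝ (n + 2) u (ball 0 1)) :
    ContDiffOn ℝ n (lap u) (ball 0 1) := by
  have hgrad : ContDiffOn ℝ (n + 1) (fderiv ℝ u) (ball 0 1) :=
    hu.fderiv_of_isOpen isOpen_ball (by rw [add_assoc, one_add_one_eq_two])
  exact ContDiffOn.sum fun i _ =>
    ((hgrad.clm_apply contDiffOn_const).fderiv_of_isOpen isOpen_ball le_rfl).clm_apply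
      contDiffOn_const

lemma lap_eq_sum_orthonormalBasis (hu : ContDiffAt ℝ 2 u x)
    (b : OrthonormalBasis (Fin N) ℝ (EuclideanSpace ℝ (Fin N))) :
    lap u x = ∑ i, fderiv ℝ (fderiv ℝ u) x (b i) (b i) := by
  have hgrad : DifferentiableAt ℝ (fderiv ℝ u) x :=
    (hu.fderiv_right (m := 1) (by norm_num)).differentiableAt one_ne_zero
  have hlaplacian (b : OrthonormalBasis (Fin N) ℝ (EuclideanSpace ℝ (Fin N))) :
      Laplacian.laplacian u x = ∑ i, fderiv ℝ (fderiv ℝ u) x (b i) (b i) := by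
    simp [InnerProductSpace.laplacian_eq_iteratedFDeriv_orthonormalBasis u b,
      iteratedFDeriv_two_apply]
  rw [← hlaplacian b, hlaplacian (EuclideanSpace.basisFun (Fin N) ℝ)]
  refine Finset.sum_congr rfl fun i _ => ?_
  rw [(hgrad.hasFDerivAt.clm_apply (hasFDerivAt_const (EuclideanSpace.single i (1 : ℝ)) x)).fderiv]
  simp

variable (R : EuclideanSpace ℝ (Fin N) ≃ₗᵢ[ℝ] EuclideanSpace ℝ (Fin N))

lemma lap_comp_linearIsometryEquiv (hu : ContDiffAt ℝ 2 u (R x)) :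
    lap (fun y => u (R y)) x = lap u (R x) := by
  rw [lap_eq_sum_orthonormalBasis hu ((EuclideanSpace.basisFun (Fin N) ℝ).map R),
    lap_eq_sum_orthonormalBasis (u := fun y => u (R y)) (hu.comp x R.contDiff.contDiffAt)
      (EuclideanSpace.basisFun (Fin N) ℝ)]
  let T : EuclideanSpace ℝ (Fin N) →L[ℝ] EuclideanSpace ℝ (Fin N) := R.toContinuousLinearEquiv
  have hgrad : fderiv ℝ (fun y => u (R y)) = fun y => (fderiv ℝ u (R y)).comp T :=
    funext fun y => R.toContinuousLinearEquiv.comp_right_fderiv (f := u)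
  have hhess : HasFDerivAt (fun y => fderiv ℝ u (R y)) ((fderiv ℝ (fderiv ℝ u) (R x)).comp T) x :=
    ((hu.fderiv_right (m := 1) (by norm_num)).differentiableAt one_ne_zero).hasFDerivAt.comp x
      R.toContinuousLinearEquiv.hasFDerivAt
  refine Finset.sum_congr rfl fun i _ => ?_
  rw [hgrad, (hhess.clm_comp (hasFDerivAt_const T x)).fderiv]
  simp [T]

lemma IsClassicalSolutionAB.comp_linearIsometryEquiv (hu : IsClassicalSolutionAB N lam α β u) :
    IsClassicalSolutionAB N lam α β fun x => u (R x) := by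
  have hball {y : EuclideanSpace ℝ (Fin N)} (hy : y ∈ ball 0 1) :
      R y ∈ ball (0 : EuclideanSpace ℝ (Fin N)) 1 := by simpa using hy
  have hmaps : MapsTo R (closedBall 0 1) (closedBall 0 1) := fun y hy => by simpa using hy
  have hu4 : ContDiffOn ℝ 4 u (ball 0 1) := hu.contDiffOn.mono ball_subset_closedBall
  refine ⟨hu.contDiffOn.comp R.contDiff.contDiffOn hmaps, fun x hx => hu.gt_alpha _ (hball hx),
    fun x hx => hu.lt_one _ (hball hx), fun x hx => ?_, fun x hx => hu.bdry _ (by simpa using hx),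
    fun x hx => ?_⟩
  · have hlap : lap (fun y => u (R y)) =ᶠ[𝓝 x] fun y => lap u (R y) := by
      filter_upwards [isOpen_ball.mem_nhds hx] with y hy
      exact lap_comp_linearIsometryEquiv R
        ((hu4.contDiffAt (isOpen_ball.mem_nhds (hball hy))).of_le (by norm_num))
    rw [← hu.eqn _ (hball hx), biharm, lap_congr hlap]
    exact lap_comp_linearIsometryEquiv R
      ((contDiffOn_lap (n := 2) hu4).contDiffAt (isOpen_ball.mem_nhds (hball hx)))
  · have hRx : ‖R x‖ = 1 := by simpa using hx
    have hfd : HasFDerivWithinAt u (fderivWithin ℝ u (closedBall 0 1) (R x)) (closedBall 0 1)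
        (R x) :=
      (hu.contDiffOn.differentiableOn (by norm_num) _ (by simpa using hRx.le)).hasFDerivWithinAt
    have hcomp := hfd.comp x R.toContinuousLinearEquiv.hasFDerivWithinAt hmaps
    rw [← hu.bdry_deriv _ hRx]
    exact DFunLike.congr_fun
      (hcomp.fderivWithin (uniqueDiffOn_closedBall 0 one_pos x (by simp [hx]))) x

/-- `u` is the minimal classical solution of `(P)_{λ,α,β}`: it lies below every classical solution
on the open ball. -/
def IsMinimalSolutionAB (N : ℕ) (lam α β : ℝ) (u : EuclideanSpace ℝ (Fin N) → ℝ) : Prop :=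
  IsClassicalSolutionAB N lam α β u ∧ ∀ v, IsClassicalSolutionAB N lam α β v →
    ∀ x ∈ ball (0 : EuclideanSpace ℝ (Fin N)) 1, u x ≤ v x

/-- `w` is radial on the unit ball, expressed as invariance under all linear isometries. -/
def IsRadialOnBall (w : EuclideanSpace ℝ (Fin N) → ℝ) : Prop :=
  ∀ (R : EuclideanSpace ℝ (Fin N) ≃ₗᵢ[ℝ] EuclideanSpace ℝ (Fin N)),
    ∀ x ∈ ball (0 : EuclideanSpace ℝ (Fin N)) 1, w (R x) = w x

lemma IsMinimalSolutionAB.isRadialOnBall (hu : IsMinimalSolutionAB N lam α β u) :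
    IsRadialOnBall u := by
  intro R x hx
  refine le_antisymm ?_ (hu.2 _ (hu.1.comp_linearIsometryEquiv R) x hx)
  simpa using hu.2 _ (hu.1.comp_linearIsometryEquiv R.symm) (R x) (by simpa using hx)

namespace IsRadialOnBall

lemma comp_eventuallyEq (hw : IsRadialOnBall w) (hx : x ∈ ball 0 1) :
    (fun y => w (R y)) =ᶠ[𝓝 x] w := by
  filter_upwards [isOpen_ball.mem_nhds hx] with y hy using hw R y hy

lemma eq_of_norm_eq (hw : IsRadialOnBall w) (hx : x ∈ ball 0 1)
    {y : EuclideanSpace ℝ (Fin N)} (hxy : ‖x‖ = ‖y‖) : w x = w y := by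
  rw [← hw (Submodule.reflection (ℝ ∙ (x - y))ᗮ) x hx, Submodule.reflection_sub hxy]

protected lemma lap (hw : IsRadialOnBall w) (hw2 : ContDiffOn ℝ 2 w (ball 0 1)) :
    IsRadialOnBall (lap w) := by
  intro R x hx
  rw [← lap_comp_linearIsometryEquiv R (hw2.contDiffAt (isOpen_ball.mem_nhds (by simpa using hx))),
    lap_congr (hw.comp_eventuallyEq R hx)]

lemma fderiv_apply_eq_zero (hw : IsRadialOnBall w) (hx : x ∈ ball 0 1)
    {v : EuclideanSpace ℝ (Fin N)} (hxv : inner ℝ v x = 0) : fderiv ℝ w x v = 0 := by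
  let R := Submodule.reflection (ℝ ∙ v)ᗮ
  have hRx : R x = x := Submodule.reflection_mem_subspace_eq_self
    (Submodule.mem_orthogonal_singleton_iff_inner_right.2 hxv)
  have hRv : R v = -v := Submodule.reflection_orthogonalComplement_singleton_eq_neg v
  have hchain : fderiv ℝ (fun y => w (R y)) x v = fderiv ℝ w (R x) (R v) :=
    DFunLike.congr_fun (R.toContinuousLinearEquiv.comp_right_fderiv (f := w)) v
  rw [(hw.comp_eventuallyEq R hx).fderiv_eq, hRx, hRv, map_neg] at hchain
  linarith

lemma fderiv_eq_smul_innerSL (hw : IsRadialOnBall w) (hx : x ∈ ball 0 1) :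
    fderiv ℝ w x = (fderiv ℝ w x x / ‖x‖ ^ 2) • innerSL ℝ x := by
  ext v
  rcases eq_or_ne x 0 with rfl | hx0
  · simp [hw.fderiv_apply_eq_zero hx (v := v)]
  · have hperp : inner ℝ (v - (inner ℝ x v / ‖x‖ ^ 2) • x) x = 0 := by
      rw [inner_sub_left, real_inner_smul_left, real_inner_self_eq_norm_sq, real_inner_comm]
      field_simp
      ring
    have hv := hw.fderiv_apply_eq_zero hx hperp
    rw [map_sub, map_smul, sub_eq_zero] at hv
    rw [hv, smul_apply, innerSL_apply_apply, smul_eq_mul, smul_eq_mul]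
    ring

end IsRadialOnBall

end Isometries

section RadialRepresentation

variable {m : ℕ} {lam α β c : ℝ} {h : C(ℝ, ℝ)} {u w : EuclideanSpace ℝ (Fin (m + 1)) → ℝ}

lemma IsRadialOnBall.hasDerivAt_pow_mul_fderiv (hw : IsRadialOnBall w)
    (hw2 : ContDiffOn ℝ 2 w (ball 0 1)) {x : EuclideanSpace ℝ (Fin (m + 1))} {t : ℝ} (ht : t ≠ 0)
    (hx : x ≠ 0) (htx : t • x ∈ ball 0 1) :
    HasDerivAt (fun s : ℝ => s ^ m * fderiv ℝ w (s • x) x)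
      (‖x‖ ^ 2 * (t ^ m * lap w (t • x))) t := by
  let a := fun y => fderiv ℝ w y y / ‖y‖ ^ 2
  have hnhds := isOpen_ball.mem_nhds htx
  have hgrad : DifferentiableAt ℝ (fderiv ℝ w) (t • x) :=
    ((hw2.contDiffAt hnhds).fderiv_right (m := 1) (by norm_num)).differentiableAt one_ne_zero
  have ha : DifferentiableAt ℝ a (t • x) := by
    have hnum : DifferentiableAt ℝ (fun y => fderiv ℝ w y y) (t • x) :=
      hgrad.clm_apply differentiableAt_id
    have hden : DifferentiableAt ℝ (fun y : EuclideanSpace ℝ (Fin (m + 1)) => ‖y‖ ^ 2) (t • x) :=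
      differentiableAt_id.norm_sq ℝ
    simpa only [a, div_eq_mul_inv] using hnum.fun_mul (hden.fun_inv (by simp [ht, hx]))
  have hlap : lap w (t • x) = (m + 1 : ℕ) * a (t • x) + fderiv ℝ a (t • x) (t • x) :=
    lap_eq_of_fderiv_eq_smul
      (by filter_upwards [hnhds] with y hy using hw.fderiv_eq_smul_innerSL hy) ha
  have hray : HasDerivAt (fun s : ℝ => s • x) x t := by
    simpa using (hasDerivAt_id t).smul_const x
  have hflux := ((hasDerivAt_pow (m + 1) t).mul
    (ha.hasFDerivAt.comp_hasDerivAt t hray)).const_mul (‖x‖ ^ 2)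
  have heq : (fun s : ℝ => s ^ m * fderiv ℝ w (s • x) x) =ᶠ[𝓝 t]
      fun s => ‖x‖ ^ 2 * (s ^ (m + 1) * a (s • x)) := by
    filter_upwards [isOpen_ne.mem_nhds ht] with s hs
    have hs' : s ≠ 0 := hs
    have := norm_ne_zero_iff.2 hx
    simp only [a, map_smul, smul_eq_mul, norm_smul, Real.norm_eq_abs, mul_pow, sq_abs]
    field_simp
    ring
  refine (hflux.congr_of_eventuallyEq heq).congr_deriv ?_
  rw [hlap, map_smul, smul_eq_mul]
  simp only [Function.comp_apply, add_tsub_cancel_right, pow_succ]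
  ring

lemma IsRadialOnBall.fderiv_eq_radialMean_smul (hw : IsRadialOnBall w)
    (hw2 : ContDiffOn ℝ 2 w (ball 0 1)) (hlap : ∀ x ∈ ball 0 1, lap w x = h ‖x‖)
    {x : EuclideanSpace ℝ (Fin (m + 1))} (hx : x ∈ ball 0 1) :
    fderiv ℝ w x = radialMean m h ‖x‖ • innerSL ℝ x := by
  rcases eq_or_ne x 0 with rfl | hx0
  · ext v
    simp [hw.fderiv_apply_eq_zero hx (v := v)]
  have hmem {t : ℝ} (ht : t ∈ Icc (0 : ℝ) 1) : t • x ∈ ball 0 1 := by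
    rw [mem_ball_zero_iff] at hx ⊢
    rw [norm_smul, Real.norm_of_nonneg ht.1]
    exact (mul_le_of_le_one_left (norm_nonneg x) ht.2).trans_lt hx
  have hcont : ContinuousOn (fun s : ℝ => s ^ m * fderiv ℝ w (s • x) x) (Icc 0 1) := by
    have hgrad := (hw2.continuousOn_fderiv_of_isOpen isOpen_ball one_le_two).comp
      (by fun_prop : Continuous fun s : ℝ => s • x).continuousOn fun s hs => hmem hs
    exact (continuous_pow m).continuousOn.mul (hgrad.clm_apply continuousOn_const)
  have hderiv (t : ℝ) (ht : t ∈ Ioo (0 : ℝ) 1) :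
      HasDerivAt (fun s : ℝ => s ^ m * fderiv ℝ w (s • x) x)
        (‖x‖ ^ 2 * (t ^ m * h (t * ‖x‖))) t := by
    have htx := hmem (Ioo_subset_Icc_self ht)
    refine (hw.hasDerivAt_pow_mul_fderiv hw2 ht.1.ne' hx0 htx).congr_deriv ?_
    rw [hlap _ htx, norm_smul, Real.norm_of_nonneg ht.1.le]
  have hflux := intervalIntegral.integral_eq_sub_of_hasDerivAt_of_le zero_le_one hcont hderiv
    (Continuous.intervalIntegrable (by fun_prop) 0 1)
  have hzero : fderiv ℝ w 0 x = 0 := hw.fderiv_apply_eq_zero (by simp) (inner_zero_right x)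
  rw [intervalIntegral.integral_const_mul, zero_smul, hzero, one_smul, one_pow, one_mul, mul_zero,
    sub_zero] at hflux
  rw [hw.fderiv_eq_smul_innerSL hx, ← hflux, mul_div_cancel_left₀ _ (by simpa using hx0),
    radialMean_apply]
  rfl

lemma IsRadialOnBall.eq_add_radialPotential (hw : IsRadialOnBall w)
    (hw2 : ContDiffOn ℝ 2 w (ball 0 1)) (hlap : ∀ x ∈ ball 0 1, lap w x = h ‖x‖) :
    EqOn w (fun x => w 0 + radialPotential m h ‖x‖) (ball 0 1) := by
  have hpot (x : EuclideanSpace ℝ (Fin (m + 1))) :=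
    (hasFDerivAt_radialPotential_norm (m := m) h x).const_add (w 0)
  refine isOpen_ball.eqOn_of_fderiv_eq (x := 0) (convex_ball _ _).isPreconnected
    (hw2.differentiableOn two_ne_zero) (fun x _ => (hpot x).differentiableAt.differentiableWithinAt)
    (fun x hx => ?_) (by simp) (by simp [radialPotential_zero])
  rw [(hpot x).fderiv, hw.fderiv_eq_radialMean_smul hw2 hlap hx]

lemma eq_plateLaplacian_of_radialIntegral_eq
    (hc : radialIntegral m (c • 1 + radialPotential m h) = β) :
    c • 1 + radialPotential m h = plateLaplacian m β h := by
  ext r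
  rw [map_add, map_smul, radialIntegral_one, smul_eq_mul] at hc
  rw [plateLaplacian_apply, ← hc]
  simp only [ContinuousMap.add_apply, ContinuousMap.smul_apply, ContinuousMap.one_apply,
    smul_eq_mul]
  field_simp
  ring

namespace IsClassicalSolutionAB

lemma eqOn_closedBall_of_lap_eq (hu : IsClassicalSolutionAB (m + 1) lam α β u)
    (hrad : IsRadialOnBall u) (hlap : ∀ x ∈ ball 0 1, lap u x = h ‖x‖) :
    EqOn u (fun x => u 0 + radialPotential m h ‖x‖) (closedBall 0 1) := by
  have hu2 : ContDiffOn ℝ 2 u (ball 0 1) :=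
    (hu.contDiffOn.mono ball_subset_closedBall).of_le (by norm_num)
  exact (hrad.eq_add_radialPotential hu2 hlap).of_subset_closure hu.contDiffOn.continuousOn
    (by fun_prop) ball_subset_closedBall (closure_ball 0 one_ne_zero).ge

lemma radialIntegral_of_lap_eq (hu : IsClassicalSolutionAB (m + 1) lam α β u)
    (hrad : IsRadialOnBall u) (hlap : ∀ x ∈ ball 0 1, lap u x = h ‖x‖) :
    radialIntegral m h = β := by
  let e : EuclideanSpace ℝ (Fin (m + 1)) := EuclideanSpace.single 0 1
  have he : ‖e‖ = 1 := by simp [e]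
  have hmem : e ∈ closedBall (0 : EuclideanSpace ℝ (Fin (m + 1))) 1 := by simp [he]
  have hpot := ((hasFDerivAt_radialPotential_norm (m := m) h e).const_add (u 0)).hasFDerivWithinAt
    (s := closedBall 0 1)
  have hfd := (hpot.congr (hu.eqOn_closedBall_of_lap_eq hrad hlap)
    (hu.eqOn_closedBall_of_lap_eq hrad hlap hmem)).fderivWithin
    (uniqueDiffOn_closedBall 0 one_pos e hmem)
  rw [← hu.bdry_deriv e he, hfd, smul_apply, innerSL_apply_apply, real_inner_self_eq_norm_sq, he,
    one_pow, smul_eq_mul, mul_one]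
  rfl

lemma eq_clampedGreen_of_biharm_eq (hu : IsClassicalSolutionAB (m + 1) lam α β u)
    (hrad : IsRadialOnBall u) (hlap : ∀ x ∈ ball 0 1, biharm u x = h ‖x‖) :
    (∀ x ∈ closedBall 0 1, u x = (radialPhi α β + clampedGreen m h) ‖x‖) ∧
      ∀ x ∈ ball 0 1, lap u x = plateLaplacian m β h ‖x‖ := by
  have hu4 : ContDiffOn ℝ 4 u (ball 0 1) := hu.contDiffOn.mono ball_subset_closedBall
  have hlapu (x) (hx : x ∈ ball 0 1) :
      lap u x = (lap u 0 • 1 + radialPotential m h : C(ℝ, ℝ)) ‖x‖ := by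
    rw [(hrad.lap (hu4.of_le (by norm_num))).eq_add_radialPotential
      (contDiffOn_lap (n := 2) hu4) hlap hx]
    simp
  rw [eq_plateLaplacian_of_radialIntegral_eq (hu.radialIntegral_of_lap_eq hrad hlapu)] at hlapu
  refine ⟨fun x hx => ?_, hlapu⟩
  let e : EuclideanSpace ℝ (Fin (m + 1)) := EuclideanSpace.single 0 1
  have he : ‖e‖ = 1 := by simp [e]
  have hrep := hu.eqOn_closedBall_of_lap_eq hrad hlapu
  have hbdry := hrep (x := e) (by simp [he])
  rw [hu.bdry e he] at hbdry
  simp only [he] at hbdry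
  rw [radialPhi_add_clampedGreen_apply, hbdry, hrep hx]
  ring

end IsClassicalSolutionAB

lemma IsClassicalSolutionAB.exists_isRadialProfile (hadm : Admissible α β)
    (hu : IsClassicalSolutionAB (m + 1) lam α β u) (hrad : IsRadialOnBall u) :
    ∃ U y : C(ℝ, ℝ), IsRadialProfile m lam α β U y ∧ (∀ x ∈ ball 0 1, u x = U ‖x‖) ∧
      ∀ x ∈ ball 0 1, lap u x = plateLaplacian m β (lam • y ^ 2) ‖x‖ := by
  let e : EuclideanSpace ℝ (Fin (m + 1)) := EuclideanSpace.single 0 1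
  have hnorm {r : ℝ} (hr : r ∈ Icc (0 : ℝ) 1) : ‖r • e‖ = r := by
    simp [e, norm_smul, abs_of_nonneg hr.1]
  have hmem (r : ℝ) : unitClamp r • e ∈ closedBall 0 1 := by
    rw [mem_closedBall_zero_iff, hnorm (unitClamp_mem r)]
    exact (unitClamp_mem r).2
  have hu1 (x) (hx : x ∈ closedBall 0 1) : u x < 1 := by
    rcases (mem_closedBall_zero_iff.1 hx).lt_or_eq with hlt | heq
    · exact hu.lt_one x (mem_ball_zero_iff.2 hlt)
    · exact (hu.bdry x heq).trans_lt hadm.lt_one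
  let U : C(ℝ, ℝ) := ⟨fun r => u (unitClamp r • e),
    hu.contDiffOn.continuousOn.comp_continuous (by fun_prop) hmem⟩
  have hU (r) : U r < 1 := hu1 _ (hmem r)
  let y : C(ℝ, ℝ) := ⟨fun r => (1 - U r)⁻¹,
    (continuous_const.sub U.continuous).inv₀ fun r => (sub_pos.2 (hU r)).ne'⟩
  have hball (x) (hx : x ∈ ball 0 1) : u x = U ‖x‖ := by
    have hx' : ‖x‖ ∈ Icc (0 : ℝ) 1 := ⟨norm_nonneg x, (mem_ball_zero_iff.1 hx).le⟩
    exact hrad.eq_of_norm_eq hx (by rw [unitClamp_of_mem hx', hnorm hx'])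
  obtain ⟨hgreen, hlap⟩ := hu.eq_clampedGreen_of_biharm_eq (h := lam • y ^ 2) hrad fun x hx => by
    rw [hu.eqn x hx, hball x hx]
    simp [y, div_eq_mul_inv]
  have hUgreen (r) (hr : r ∈ Icc (0 : ℝ) 1) :
      U r = radialPhi α β r + clampedGreen m (lam • y ^ 2) r := by
    refine (hgreen _ (hmem r)).trans ?_
    rw [hnorm (unitClamp_mem r), unitClamp_of_mem hr, ContinuousMap.add_apply]
  exact ⟨U, y, ⟨hU, fun _ => rfl, hUgreen⟩, hball, hlap⟩

end RadialRepresentation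

section MinimalBranch

variable {m : ℕ} {lam mu α β : ℝ} {U V y z : C(ℝ, ℝ)} {u v : EuclideanSpace ℝ (Fin (m + 1)) → ℝ}

/-- The surface area of the unit sphere of `ℝᵐ⁺¹`, the Jacobian constant in polar coordinates. -/
noncomputable def sphereArea (m : ℕ) : ℝ :=
  (m + 1) * (volume : Measure (EuclideanSpace ℝ (Fin (m + 1)))).real (ball 0 1)

lemma sphereArea_nonneg (m : ℕ) : 0 ≤ sphereArea m := by
  unfold sphereArea
  positivity

lemma setIntegral_ball_eq_radialIntegral {F : EuclideanSpace ℝ (Fin (m + 1)) → ℝ} (f : C(ℝ, ℝ))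
    (hF : ∀ x ∈ ball 0 1, F x = f ‖x‖) :
    ∫ x in ball 0 1, F x = sphereArea m * radialIntegral m f := by
  have hind : (ball 0 1).indicator F =
      fun x : EuclideanSpace ℝ (Fin (m + 1)) => (Iio 1).indicator f ‖x‖ := by
    ext x
    simp only [indicator, mem_ball_zero_iff, mem_Iio]
    split_ifs with hx
    exacts [hF x (mem_ball_zero_iff.2 hx), rfl]
  have hweight : (fun r : ℝ => r ^ m * (Iio 1).indicator f r) =
      (Iio 1).indicator fun r => r ^ m * f r :=
    funext fun r => (indicator_mul_right _ (fun r => r ^ m) f).symm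
  rw [← integral_indicator measurableSet_ball, hind, integral_fun_norm_addHaar,
    radialIntegral_eq_integral, intervalIntegral.integral_of_le zero_le_one,
    integral_Ioc_eq_integral_Ioo, ← Ioi_inter_Iio, ← setIntegral_indicator measurableSet_Iio]
  simp only [finrank_euclideanSpace, Fintype.card_fin, add_tsub_cancel_right, smul_eq_mul,
    nsmul_eq_mul, Nat.cast_succ, hweight, sphereArea, mul_assoc]

lemma IsRadialProfile.apply_one (hU : IsRadialProfile m lam α β U y) : U 1 = α := by
  rw [hU.green_eq 1 (right_mem_Icc.2 zero_le_one), ← ContinuousMap.add_apply,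
    radialPhi_add_clampedGreen_one]

namespace IsMinimalSolutionAB

lemma radialProfile_le (hu : IsMinimalSolutionAB (m + 1) lam α β u) (hβ : β ≤ 0) (hlam : 0 < lam)
    (hmu : lam ≤ mu) (hU : IsRadialProfile m lam α β U y) (huU : ∀ x ∈ ball 0 1, u x = U ‖x‖)
    (hV : IsRadialProfile m mu α β V z) {r : ℝ} (hr : r ∈ Icc (0 : ℝ) 1) : U r ≤ V r := by
  obtain ⟨W, w, hW, hWV⟩ := hV.exists_le hlam.le hmu
  obtain ⟨f, hf, hfW⟩ := hW.exists_isClassicalSolutionAB hβ hlam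
  rcases hr.2.eq_or_lt with rfl | hr1
  · rw [hU.apply_one, hV.apply_one]
  · let x : EuclideanSpace ℝ (Fin (m + 1)) := EuclideanSpace.single 0 r
    have hxr : ‖x‖ = r := by simp [x, abs_of_nonneg hr.1]
    have hx : x ∈ ball 0 1 := mem_ball_zero_iff.2 (hxr ▸ hr1)
    calc U r = u x := by rw [huU x hx, hxr]
      _ ≤ f x := hu.2 f hf x hx
      _ = W r := by rw [hfW x (ball_subset_closedBall hx), hxr]
      _ ≤ V r := hWV r hr

lemma exists_stable_isRadialProfile (hu : IsMinimalSolutionAB (m + 1) lam α β u)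
    (hv : IsMinimalSolutionAB (m + 1) mu α β v) (hadm : Admissible α β) (hlam : 0 < lam)
    (hmu : lam < mu) :
    ∃ U y : C(ℝ, ℝ), IsRadialProfile m lam α β U y ∧ (∀ x ∈ ball 0 1, u x = U ‖x‖) ∧
      (∀ x ∈ ball 0 1, lap u x = plateLaplacian m β (lam • y ^ 2) ‖x‖) ∧
      2 * radialIntegral m (y ^ 3 * (U - radialPhi α β) ^ 2) ≤
        radialIntegral m (y ^ 2 * (U - radialPhi α β)) := by
  obtain ⟨U, y, hU, huU, hlap⟩ := hu.1.exists_isRadialProfile hadm hu.isRadialOnBall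
  obtain ⟨V, z, hV, -, -⟩ := hv.1.exists_isRadialProfile hadm hv.isRadialOnBall
  exact ⟨U, y, hU, huU, hlap, hU.stability hV hlam hmu fun r hr =>
    hu.radialProfile_le hadm.1 hlam hmu.le hU huU hV hr⟩

lemma stability (hu : IsMinimalSolutionAB (m + 1) lam α β u)
    (hv : IsMinimalSolutionAB (m + 1) mu α β v) (hadm : Admissible α β) (hlam : 0 < lam)
    (hmu : lam < mu) :
    2 * ∫ x in ball 0 1, (u x - Phi α β x) ^ 2 / (1 - u x) ^ 3 ≤
      ∫ x in ball 0 1, (u x - Phi α β x) / (1 - u x) ^ 2 := by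
  obtain ⟨U, y, hU, huU, -, hstable⟩ := hu.exists_stable_isRadialProfile hv hadm hlam hmu
  have hPhi (x : EuclideanSpace ℝ (Fin (m + 1))) : Phi α β x = radialPhi α β ‖x‖ := rfl
  rw [setIntegral_ball_eq_radialIntegral (y ^ 3 * (U - radialPhi α β) ^ 2) fun x hx => ?_,
    setIntegral_ball_eq_radialIntegral (y ^ 2 * (U - radialPhi α β)) fun x hx => ?_,
    mul_left_comm]
  · exact mul_le_mul_of_nonneg_left hstable (sphereArea_nonneg m)
  all_goals simp [huU x hx, hPhi, hU.gapInv_eq, div_eq_inv_mul]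

lemma exists_energy_bound (m : ℕ) (hadm : Admissible α β) (Λ : ℝ) : ∃ C : ℝ, 0 < C ∧
    ∀ {lam mu : ℝ} {u v : EuclideanSpace ℝ (Fin (m + 1)) → ℝ},
      IsMinimalSolutionAB (m + 1) lam α β u → IsMinimalSolutionAB (m + 1) mu α β v →
      0 < lam → lam < mu → lam ≤ Λ →
      (∫ x in ball 0 1, lap u x ^ 2) + ∫ x in ball 0 1, ((1 - u x) ^ 3)⁻¹ ≤ C := by
  let K := 18 / ((1 - (α - β / 2)) ^ 3 * ((m : ℝ) + 1))
  let C := sphereArea m * ((((m : ℝ) + 1) * β) ^ 2 * ((m : ℝ) + 1)⁻¹ +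
    Λ * (1 - α) * (((m : ℝ) + 1)⁻¹ + K) + K)
  refine ⟨max C 1, lt_max_of_lt_right one_pos, fun {lam mu u v} hu hv hlam hmu hΛ => ?_⟩
  obtain ⟨U, y, hU, huU, hlap, hstable⟩ := hu.exists_stable_isRadialProfile hv hadm hlam hmu
  have hcube : radialIntegral m (y ^ 3) ≤ K := hU.radialIntegral_gapInv_cube_le hadm hstable
  have hK : 0 ≤ K :=
    (radialIntegral_nonneg fun r _ => pow_nonneg (hU.gapInv_pos r).le 3).trans hcube
  have hα : 0 ≤ 1 - α := sub_nonneg.2 hadm.lt_one.le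
  have hlaplacian : radialIntegral m (plateLaplacian m β (lam • y ^ 2) ^ 2) ≤
      (((m : ℝ) + 1) * β) ^ 2 * ((m : ℝ) + 1)⁻¹ + Λ * (1 - α) * (((m : ℝ) + 1)⁻¹ + K) := by
    rw [plateLaplacian, radialIntegral_sq_add_clampedLaplacian]
    grw [hU.radialIntegral_sq_clampedLaplacian_le hadm hlam.le, hcube, hΛ]
  rw [setIntegral_ball_eq_radialIntegral (plateLaplacian m β (lam • y ^ 2) ^ 2) fun x hx => ?_,
    setIntegral_ball_eq_radialIntegral (y ^ 3) fun x hx => ?_, ← mul_add]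
  · exact (mul_le_mul_of_nonneg_left (add_le_add hlaplacian hcube) (sphereArea_nonneg m)).trans
      (le_max_left C 1)
  · simp [huU x hx, hU.gapInv_eq]
  · simp [hlap x hx]

end IsMinimalSolutionAB

lemma solSetAB_zero (α β : ℝ) : solSetAB 0 α β = ∅ := by
  refine eq_empty_of_forall_notMem fun lam ⟨hlam, u, hu⟩ => ?_
  have heqn : 0 = lam / (1 - u 0) ^ 2 := by simpa [biharm, lap] using hu.eqn 0 (by simp)
  have hgap : 0 < 1 - u 0 := sub_pos.2 (hu.lt_one 0 (by simp))
  exact heqn.not_lt (by positivity)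

end MinimalBranch

/-- a-priori estimates along the minimal branch of `(P)_{λ,α,β}`. -/
theorem minimal_branch_estimates (N : ℕ) (α β : ℝ) (hadm : Admissible α β)
    (uMin : ℝ → EuclideanSpace ℝ (Fin N) → ℝ)
    (hMin : ∀ lam : ℝ, 0 < lam → lam < sSup (solSetAB N α β) →
      IsClassicalSolutionAB N lam α β (uMin lam) ∧
        ∀ v, IsClassicalSolutionAB N lam α β v →
          ∀ x ∈ ball (0 : EuclideanSpace ℝ (Fin N)) 1, uMin lam x ≤ v x) :
    (∀ lam : ℝ, 0 < lam → lam < sSup (solSetAB N α β) →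
      2 * ∫ x in ball (0 : EuclideanSpace ℝ (Fin N)) 1,
          (uMin lam x - Phi α β x) ^ 2 / (1 - uMin lam x) ^ 3 ≤
        ∫ x in ball (0 : EuclideanSpace ℝ (Fin N)) 1,
          (uMin lam x - Phi α β x) / (1 - uMin lam x) ^ 2) ∧
      ∃ C : ℝ, 0 < C ∧ ∀ lam : ℝ, 0 < lam → lam < sSup (solSetAB N α β) →
        (∫ x in ball (0 : EuclideanSpace ℝ (Fin N)) 1, (lap (uMin lam) x) ^ 2) +
            (∫ x in ball (0 : EuclideanSpace ℝ (Fin N)) 1, ((1 - uMin lam x) ^ 3)⁻¹) ≤ C := by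
  rcases N with _ | m
  · rw [solSetAB_zero, Real.sSup_empty]
    exact ⟨fun lam hlam hlt => absurd hlam hlt.not_gt,
      1, one_pos, fun lam hlam hlt => absurd hlam hlt.not_gt⟩
  have hnext (lam : ℝ) (hlam : 0 < lam) (hlt : lam < sSup (solSetAB (m + 1) α β)) :
      ∃ mu, lam < mu ∧ IsMinimalSolutionAB (m + 1) mu α β (uMin mu) := by
    obtain ⟨mu, hmu, hmu'⟩ := exists_between hlt
    exact ⟨mu, hmu, hMin mu (hlam.trans hmu) hmu'⟩
  constructor
  · intro lam hlam hlt
    obtain ⟨mu, hmu, hv⟩ := hnext lam hlam hlt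
    exact IsMinimalSolutionAB.stability (hMin lam hlam hlt) hv hadm hlam hmu
  · obtain ⟨C, hC, hbound⟩ := IsMinimalSolutionAB.exists_energy_bound m hadm
      (sSup (solSetAB (m + 1) α β))
    refine ⟨C, hC, fun lam hlam hlt => ?_⟩
    obtain ⟨mu, hmu, hv⟩ := hnext lam hlam hlt
    exact hbound (hMin lam hlam hlt) hv hlam hmu hlt.le
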